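/- arXiv:2107.08294 — 8 statements merged into one kernel-verified Lean document; each statement's English description precedes it below -/
import Mathlib

section
/- Fix integers K ≥ 1, k ∈ {1,…,K}, and positive integers N, M_k, N_1,…,N_k; fix a matrix H ∈ ℂ^{M_k×N}, matrices Ψ_{k'} ∈ ℂ^{N×N_{k'}} for k' = 1,…,k, and reals L > 0, σ² > 0. For Hermitian positive semi-definite matrices X_{k'} ∈ ℂ^{N_{k'}×N_{k'}} (k' = 1,…,k) define the private rate R_k(X_1,…,X_k) = log₂ det( I + (1/L) H Ψ_k X_k Ψ_k^H H^H [ σ² I + (1/L) H ( Σ_{k'=1}^{k−1} Ψ_{k'} X_{k'} Ψ_{k'}^H ) H^H ]^{-1} ). Fix Hermitian positive semi-definite base points X̆_{k'} and Hermitian direction matrices V_{k'} (k' = 1,…,k), set Q̆ = Σ_{k'=1}^{k−1} Ψ_{k'} X̆_{k'} Ψ_{k'}^H, and define the approximation R̃_k(X_1,…,X_k) = log₂ det( I + (1/(Lσ²)) H ( Σ_{k'=1}^{k} Ψ_{k'} X_{k'} Ψ_{k'}^H ) H^H ) − log₂ det( I + (1/(Lσ²)) H Q̆ H^H ) − (1/(Lσ²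 ln 2)) Σ_{k'=1}^{k−1} tr( Ψ_{k'}^H H^H [ I + (1/(Lσ²)) H Q̆ H^H ]^{-1} H Ψ_{k'} ( X_{k'} − X̆_{k'} ) ). Then there exist c > 0 and δ > 0 such that for every h ∈ (0, δ) for which X̆_{k'} + h V_{k'} is positive semi-definite for all k' = 1,…,k, one has | R_k(X̆_1 + hV_1, …, X̆_k + hV_k) − R̃_k(X̆_1 + hV_1, …, X̆_k + hV_k) | ≤ c h². -/
open Matrix
open scoped ComplexOrder

/-- The private rate `R_k` of user `k` (equation (15) of the paper):
`R_k = log₂ det( I + (1/L) H Ψ_k X_k Ψ_kᴴ Hᴴ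
  [σ² I + (1/L) H (Σ_{k'<k} Ψ_{k'} X_{k'} Ψ_{k'}ᴴ) Hᴴ]⁻¹ )`. -/
noncomputable def privateRate (k N Mk : ℕ) (Nk : ℕ → ℕ)
    (H : Matrix (Fin Mk) (Fin N) ℂ)
    (Ψ : (i : ℕ) → Matrix (Fin N) (Fin (Nk i)) ℂ)
    (L s : ℝ)
    (X : (i : ℕ) → Matrix (Fin (Nk i)) (Fin (Nk i)) ℂ) : ℝ :=
  Real.logb 2
    ((1 + ((1 / L) • (H * (Ψ k * X k * (Ψ k)ᴴ) * Hᴴ)) *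
        (s • (1 : Matrix (Fin Mk) (Fin Mk) ℂ) +
          (1 / L) • (H * (∑ i ∈ Finset.Icc 1 (k - 1), Ψ i * X i * (Ψ i)ᴴ) * Hᴴ))⁻¹).det.re)

/-- The first-order approximation `R̃_k` of the private rate around the base points `Xb`
(equation (19) of the paper). -/
noncomputable def privateRateApprox (k N Mk : ℕ) (Nk : ℕ → ℕ)
    (H : Matrix (Fin Mk) (Fin N) ℂ)
    (Ψ : (i : ℕ) → Matrix (Fin N) (Fin (Nk i)) ℂ)
    (L s : ℝ)
    (Xb X : (i : ℕ) → Matrix (Fin (Nk i)) (Fin (Nk i)) ℂ) : ℝ :=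
  Real.logb 2
      ((1 + (1 / (L * s)) •
          (H * (∑ i ∈ Finset.Icc 1 k, Ψ i * X i * (Ψ i)ᴴ) * Hᴴ)).det.re)
    - Real.logb 2
      ((1 + (1 / (L * s)) •
          (H * (∑ i ∈ Finset.Icc 1 (k - 1), Ψ i * Xb i * (Ψ i)ᴴ) * Hᴴ)).det.re)
    - (1 / (L * s * Real.log 2)) *
        ∑ i ∈ Finset.Icc 1 (k - 1),
          ((Ψ i)ᴴ * Hᴴ *
            ((1 : Matrix (Fin Mk) (Fin Mk) ℂ) + (1 / (L * s)) •
              (H * (∑ j ∈ Finset.Icc 1 (k - 1), Ψ j * Xb j * (Ψ j)ᴴ) * Hᴴ))⁻¹ *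
            H * Ψ i * (X i - Xb i)).trace.re


theorem aux_log_bound (u : ℝ) (hu : |u| ≤ 1/2) : |Real.log (1 + u) - u| ≤ 2 * u ^ 2 := by
  obtain ⟨h1, h2⟩ := abs_le.1 hu
  have hp : 0 < 1 + u := by linarith
  have ha := Real.log_le_sub_one_of_pos hp
  have hb := Real.one_sub_inv_le_log_of_pos hp
  have hc : u - 2 * u ^ 2 ≤ 1 - (1 + u)⁻¹ := by
    have : 1 - (1 + u)⁻¹ = u / (1 + u) := by field_simp; ring
    rw [this, le_div_iff₀ hp]
    nlinarith [sq_nonneg u, mul_nonneg (sq_nonneg u) (by linarith : 0 ≤ 1 + 2 * u)]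
  rw [abs_le]
  constructor <;> nlinarith [sq_nonneg u]

theorem aux_logdet {n : ℕ} (A B : Matrix (Fin n) (Fin n) ℂ) (hA : A.PosDef) :
    ∃ c > (0 : ℝ), ∃ δ > (0 : ℝ), ∀ h : ℝ, 0 < h → h < δ →
      |Real.log ((A + h • B).det.re) - Real.log (A.det.re) - h * (A⁻¹ * B).trace.re| ≤ c * h ^ 2 := by
  obtain ⟨p, hp⟩ : ∃ p : Polynomial ℂ, ∀ r : ℂ, (1 + r • (A⁻¹ * B)).det
      = 1 + (A⁻¹ * B).trace * r + p.eval r * r ^ 2 := ⟨_, fun r => Matrix.det_one_add_smul r _⟩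
  have hdet : 0 < A.det := hA.det_pos
  have hre : 0 < A.det.re := (Complex.pos_iff.1 hdet).1
  have him : A.det.im = 0 := (Complex.pos_iff.1 hdet).2.symm
  have hunit : IsUnit A.det := hdet.ne'.isUnit
  set t := (A⁻¹ * B).trace.re with ht
  have hdeteq : ∀ h : ℝ, (A + h • B).det.re
      = A.det.re * (1 + (t * h + (p.eval (h : ℂ)).re * h ^ 2)) := by
    intro h
    have h1 : A + h • B = A * (1 + (h : ℂ) • (A⁻¹ * B)) := by
      rw [mul_add, mul_one, mul_smul_comm, ← mul_assoc, Matrix.mul_nonsing_inv _ hunit, one_mul]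
      rfl
    rw [h1, Matrix.det_mul, hp, Complex.mul_re, him, zero_mul, sub_zero]
    have h2 : ((h : ℂ)) ^ 2 = ((h ^ 2 : ℝ) : ℂ) := by push_cast; rfl
    rw [h2]
    simp only [Complex.add_re, Complex.one_re, Complex.re_mul_ofReal]
    rw [← ht]
    ring
  obtain ⟨C, hC⟩ : ∃ C, ∀ h ∈ Set.Icc (0 : ℝ) 1, ‖(p.eval (h : ℂ)).re‖ ≤ C := by
    apply isCompact_Icc.exists_bound_of_continuousOn
    have : Continuous fun h : ℝ => p.eval (h : ℂ) := p.continuous.comp Complex.continuous_ofReal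
    exact (Complex.continuous_re.comp this).continuousOn
  have hC0 : 0 ≤ C := (norm_nonneg _).trans (hC 0 (by simp))
  set D := |t| + C + 1 with hD
  have hDpos : 1 ≤ D := by have := abs_nonneg t; linarith
  refine ⟨C + 2 * D ^ 2, by positivity, 1 / (2 * D), by positivity, fun h h0 hδ => ?_⟩
  have hhD : h * D ≤ 1 / 2 := by
    rw [lt_div_iff₀ (by positivity)] at hδ
    linarith
  have h1 : h ≤ 1 := by nlinarith
  have hq := hC h ⟨h0.le, h1⟩
  rw [Real.norm_eq_abs] at hq
  set q := (p.eval (h : ℂ)).re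
  have hu : |t * h + q * h ^ 2| ≤ D * h := by
    calc |t * h + q * h ^ 2| ≤ |t * h| + |q * h ^ 2| := abs_add_le _ _
      _ = |t| * h + |q| * h ^ 2 := by rw [abs_mul, abs_mul, abs_of_pos h0, abs_of_pos (by positivity : 0 < h ^ 2)]
      _ ≤ D * h := by
        have : |q| * h ^ 2 ≤ C * h := by
          have : h ^ 2 ≤ h := by nlinarith
          exact mul_le_mul hq this (by positivity) hC0
        rw [hD]; nlinarith
  have hu' : |t * h + q * h ^ 2| ≤ 1 / 2 := hu.trans (by linarith)
  have hlb := aux_log_bound _ hu'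
  have hpos : 0 < 1 + (t * h + q * h ^ 2) := by have := (abs_le.1 hu').1; linarith
  rw [hdeteq, Real.log_mul hre.ne' hpos.ne']
  have husq : (t * h + q * h ^ 2) ^ 2 ≤ (D * h) ^ 2 := sq_le_sq' (by linarith [(abs_le.1 hu).1]) (abs_le.1 hu).2
  have hqq : |q * h ^ 2| ≤ C * h ^ 2 := by
    rw [abs_mul, abs_of_pos (by positivity : 0 < h ^ 2)]
    exact mul_le_mul_of_nonneg_right hq (by positivity)
  rw [abs_le] at *
  constructor <;> nlinarith

theorem aux_posdef {N M : ℕ} {n : ℕ → ℕ} (S : Finset ℕ) (H : Matrix (Fin M) (Fin N) ℂ)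
    (Ψ : (i : ℕ) → Matrix (Fin N) (Fin (n i)) ℂ) (a : ℝ) (ha : 0 ≤ a)
    (X : (i : ℕ) → Matrix (Fin (n i)) (Fin (n i)) ℂ) (hX : ∀ i ∈ S, (X i).PosSemidef) :
    (1 + a • (H * (∑ i ∈ S, Ψ i * X i * (Ψ i)ᴴ) * Hᴴ)).PosDef := by
  apply Matrix.PosDef.one.add_posSemidef
  apply Matrix.PosSemidef.smul _ ha
  apply Matrix.PosSemidef.mul_mul_conjTranspose_same
  apply Matrix.posSemidef_sum
  intro i hi
  exact (hX i hi).mul_mul_conjTranspose_same _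

theorem privateRate_first_order (K k N Mk : ℕ) (hK : 1 ≤ K) (hk1 : 1 ≤ k) (hkK : k ≤ K)
    (hN : 0 < N) (hMk : 0 < Mk)
    (Nk : ℕ → ℕ) (hNk : ∀ i ∈ Finset.Icc 1 k, 0 < Nk i)
    (H : Matrix (Fin Mk) (Fin N) ℂ)
    (Ψ : (i : ℕ) → Matrix (Fin N) (Fin (Nk i)) ℂ)
    (L s : ℝ) (hL : 0 < L) (hs : 0 < s)
    (Xb V : (i : ℕ) → Matrix (Fin (Nk i)) (Fin (Nk i)) ℂ)
    (hXb : ∀ i ∈ Finset.Icc 1 k, (Xb i).PosSemidef)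
    (hV : ∀ i ∈ Finset.Icc 1 k, (V i).IsHermitian) :
    ∃ c > (0 : ℝ), ∃ δ > (0 : ℝ), ∀ h : ℝ, 0 < h → h < δ →
      (∀ i ∈ Finset.Icc 1 k, (Xb i + h • V i).PosSemidef) →
      |privateRate k N Mk Nk H Ψ L s (fun i => Xb i + h • V i)
          - privateRateApprox k N Mk Nk H Ψ L s Xb (fun i => Xb i + h • V i)|
        ≤ c * h ^ 2 := by
  have hsub : ∀ i ∈ Finset.Icc 1 (k - 1), i ∈ Finset.Icc 1 k := by
    intro i hi
    rw [Finset.mem_Icc] at *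
    omega
  have ha : (0 : ℝ) ≤ 1 / (L * s) := by positivity
  have hA0 := aux_posdef (Finset.Icc 1 (k - 1)) H Ψ _ ha Xb (fun i hi => hXb i (hsub i hi))
  obtain ⟨c, hc, δ, hδ, hb⟩ := aux_logdet _
    ((1 / (L * s)) • (H * (∑ i ∈ Finset.Icc 1 (k - 1), Ψ i * V i * (Ψ i)ᴴ) * Hᴴ)) hA0
  have hl2 : 0 < Real.log 2 := Real.log_pos (by norm_num)
  refine ⟨c / Real.log 2, by positivity, δ, hδ, fun h h0 hh hpsd => ?_⟩
  have hAh := aux_posdef (Finset.Icc 1 (k - 1)) H Ψ _ ha (fun i => Xb i + h • V i)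
    (fun i hi => hpsd i (hsub i hi))
  have hT := aux_posdef (Finset.Icc 1 k) H Ψ _ ha (fun i => Xb i + h • V i) hpsd
  have hbh := hb h h0 hh
  have hAeq : 1 + (1 / (L * s)) • (H * (∑ i ∈ Finset.Icc 1 (k - 1), Ψ i * Xb i * (Ψ i)ᴴ) * Hᴴ)
      + h • ((1 / (L * s)) • (H * (∑ i ∈ Finset.Icc 1 (k - 1), Ψ i * V i * (Ψ i)ᴴ) * Hᴴ))
      = 1 + (1 / (L * s)) • (H * (∑ i ∈ Finset.Icc 1 (k - 1),
          Ψ i * (Xb i + h • V i) * (Ψ i)ᴴ) * Hᴴ) := by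
    rw [smul_comm h, add_assoc, ← smul_add, ← Matrix.smul_mul, ← Matrix.mul_smul, ← Matrix.add_mul,
      ← Matrix.mul_add, Finset.smul_sum, ← Finset.sum_add_distrib]
    simp only [Matrix.mul_add, Matrix.add_mul, Matrix.mul_smul, Matrix.smul_mul]
  rw [hAeq] at hbh
  have hrate : privateRate k N Mk Nk H Ψ L s (fun i => Xb i + h • V i)
      = Real.logb 2 ((1 + (1 / (L * s)) •
          (H * (∑ i ∈ Finset.Icc 1 k, Ψ i * (Xb i + h • V i) * (Ψ i)ᴴ) * Hᴴ)).det.re)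
        - Real.logb 2 ((1 + (1 / (L * s)) •
          (H * (∑ i ∈ Finset.Icc 1 (k-1), Ψ i * (Xb i + h • V i) * (Ψ i)ᴴ) * Hᴴ)).det.re) := by
    unfold privateRate
    have hsum : ∑ i ∈ Finset.Icc 1 k, Ψ i * (Xb i + h • V i) * (Ψ i)ᴴ
        = (∑ i ∈ Finset.Icc 1 (k-1), Ψ i * (Xb i + h • V i) * (Ψ i)ᴴ)
          + Ψ k * (Xb k + h • V k) * (Ψ k)ᴴ := by
      obtain ⟨m, rfl⟩ : ∃ m, k = m + 1 := ⟨k - 1, by omega⟩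
      rw [Finset.sum_Icc_succ_top (by omega)]
      rfl
    rw [hsum] at hT ⊢
    simp only at hAh hT ⊢
    generalize (∑ i ∈ Finset.Icc 1 (k-1), Ψ i * (Xb i + h • V i) * (Ψ i)ᴴ) = Q at hAh hT ⊢
    generalize Ψ k * (Xb k + h • V k) * (Ψ k)ᴴ = P at hT ⊢
    set A := 1 + (1 / (L * s)) • (H * Q * Hᴴ) with hA
    set T := 1 + (1 / (L * s)) • (H * (Q + P) * Hᴴ) with hTd
    have hdA := hAh.det_pos
    have hdT := hT.det_pos
    have hS : s • (1 : Matrix (Fin Mk) (Fin Mk) ℂ) + (1 / L) • (H * Q * Hᴴ) = s • A := by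
      rw [hA, smul_add, smul_smul]
      congr 2
      field_simp
    have hAA : A * A⁻¹ = 1 := Matrix.mul_nonsing_inv _ hdA.ne'.isUnit
    have hinv : (s • A)⁻¹ = (1 / s) • A⁻¹ := by
      apply Matrix.inv_eq_right_inv
      rw [smul_mul_smul_comm, hAA, mul_one_div_cancel hs.ne', one_smul]
    have hmat : 1 + ((1 / L) • (H * P * Hᴴ)) * (s • A)⁻¹ = T * A⁻¹ := by
      have hT' : T = A + (1 / (L * s)) • (H * P * Hᴴ) := by
        rw [hTd, hA, Matrix.mul_add, Matrix.add_mul, smul_add, add_assoc]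
      rw [hT', add_mul, hAA, hinv, smul_mul_smul_comm, smul_mul_assoc]
      congr 2
      field_simp
    rw [hS, hmat, Matrix.det_mul, Matrix.det_nonsing_inv, Ring.inverse_eq_inv']
    obtain ⟨hA1, hA2⟩ := Complex.pos_iff.1 hdA
    obtain ⟨hT1, hT2⟩ := Complex.pos_iff.1 hdT
    have e1 : A.det = (A.det.re : ℂ) := Complex.ext rfl (by simp [← hA2])
    rw [e1, ← Complex.ofReal_inv, Complex.re_mul_ofReal, Complex.ofReal_re, ← div_eq_mul_inv,
      Real.logb_div hT1.ne' hA1.ne']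
  rw [hrate]
  unfold privateRateApprox
  set A0 := 1 + (1 / (L * s)) • (H * (∑ i ∈ Finset.Icc 1 (k - 1), Ψ i * Xb i * (Ψ i)ᴴ) * Hᴴ)
  have htr : (∑ i ∈ Finset.Icc 1 (k - 1),
      ((Ψ i)ᴴ * Hᴴ * A0⁻¹ * H * Ψ i * ((Xb i + h • V i) - Xb i)).trace.re)
      = L * s * (h * (A0⁻¹ * ((1 / (L * s)) •
        (H * (∑ i ∈ Finset.Icc 1 (k - 1), Ψ i * V i * (Ψ i)ᴴ) * Hᴴ))).trace.re) := by
    have e : ∀ i, ((Ψ i)ᴴ * Hᴴ * A0⁻¹ * H * Ψ i * ((Xb i + h • V i) - Xb i)).trace.re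
        = h * (A0⁻¹ * (H * (Ψ i * V i * (Ψ i)ᴴ) * Hᴴ)).trace.re := by
      intro i
      rw [add_sub_cancel_left, Matrix.mul_smul, Matrix.trace_smul, Complex.smul_re, smul_eq_mul]
      congr 2
      rw [Matrix.mul_assoc (Ψ i)ᴴ, Matrix.mul_assoc (Ψ i)ᴴ, Matrix.mul_assoc (Ψ i)ᴴ,
        Matrix.mul_assoc (Ψ i)ᴴ, Matrix.trace_mul_comm, Matrix.mul_assoc Hᴴ, Matrix.mul_assoc Hᴴ,
        Matrix.mul_assoc Hᴴ, Matrix.mul_assoc Hᴴ, Matrix.trace_mul_comm]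
      simp only [Matrix.mul_assoc]
    rw [Finset.sum_congr rfl (fun i _ => e i), ← Finset.mul_sum, Matrix.mul_smul,
      Matrix.trace_smul, Complex.smul_re, smul_eq_mul, Matrix.mul_sum, Matrix.sum_mul,
      Matrix.mul_sum, Matrix.trace_sum, Complex.re_sum]
    field_simp
  simp only at htr ⊢
  rw [htr]
  simp only [Real.logb]
  rw [← abs_neg] at hbh
  rw [show c / Real.log 2 * h ^ 2 = (c * h ^ 2) / Real.log 2 by ring, le_div_iff₀ hl2]
  refine le_trans (le_of_eq ?_) hbh
  have habs : ∀ x : ℝ, |x| * Real.log 2 = |x * Real.log 2| := fun x => by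
    rw [abs_mul, abs_of_pos hl2]
  rw [habs]
  congr 1
  generalize (A0⁻¹ * ((1 / (L * s)) •
        (H * (∑ i ∈ Finset.Icc 1 (k - 1), Ψ i * V i * (Ψ i)ᴴ) * Hᴴ))).trace.re = t
  generalize Real.log (A0.det.re) = x
  generalize Real.log ((1 + (1 / (L * s)) •
          (H * (∑ i ∈ Finset.Icc 1 k, Ψ i * (Xb i + h • V i) * (Ψ i)ᴴ) * Hᴴ)).det.re) = y
  generalize Real.log ((1 + (1 / (L * s)) •
          (H * (∑ i ∈ Finset.Icc 1 (k-1), Ψ i * (Xb i + h • V i) * (Ψ i)ᴴ) * Hᴴ)).det.re) = z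
  field_simp
  ring
end

section
/- Fix integers K ≥ 1, k ∈ {1,…,K}, and positive integers N, M_k, N_1,…,N_k; fix a matrix H ∈ ℂ^{M_k×N}, matrices Ψ_{k'} ∈ ℂ^{N×N_{k'}} for k' = 1,…,k, reals L > 0, σ² > 0, and a Hermitian positive semi-definite matrix Q_c ∈ ℂ^{N×N}. For Hermitian positive semi-definite matrices X_{k'} ∈ ℂ^{N_{k'}×N_{k'}} (k' = 1,…,k) define the common rate R_{k,c}(X_1,…,X_k) = log₂ det( I + (1/L) H Q_c H^H [ σ² I + (1/L) H ( Σ_{k'=1}^{k} Ψ_{k'} X_{k'} Ψ_{k'}^H ) H^H ]^{-1} ). Fix Hermitian positive semi-definite base points X̆_{k'} and Hermitian direction matrices V_{k'} (k' = 1,…,k), set Q̆ = Σ_{k'=1}^{k} Ψ_{k'} X̆_{k'} Ψ_{k'}^H, and define the approximation R̃_{k,c}(X_1,…,X_k) = log₂ det( I + (1/(Lσ²)) H Q_c H^H + (1/(Lσ²)) H ( Σ_{k'=1}^{k} Ψ_{k'} X_{k'} Ψ_{k'}^H ) H^H ) − log₂ det( I + (1/(Lσ²)) H Q̆ H^H )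 − (1/(Lσ² ln 2)) Σ_{k'=1}^{k} tr( Ψ_{k'}^H H^H [ I + (1/(Lσ²)) H Q̆ H^H ]^{-1} H Ψ_{k'} ( X_{k'} − X̆_{k'} ) ). Then there exist c > 0 and δ > 0 such that for every h ∈ (0, δ) for which X̆_{k'} + h V_{k'} is positive semi-definite for all k' = 1,…,k, one has | R_{k,c}(X̆_1 + hV_1, …, X̆_k + hV_k) − R̃_{k,c}(X̆_1 + hV_1, …, X̆_k + hV_k) | ≤ c h². -/
open Matrix
open scoped ComplexOrder

/-- The common-message rate `R_{k,c}` of user `k` (equation (16) of the paper):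
`R_{k,c} = log₂ det( I + (1/L) H Q_c Hᴴ
  [σ² I + (1/L) H (Σ_{k'≤k} Ψ_{k'} X_{k'} Ψ_{k'}ᴴ) Hᴴ]⁻¹ )`. -/
noncomputable def commonRate (k N Mk : ℕ) (Nk : ℕ → ℕ)
    (H : Matrix (Fin Mk) (Fin N) ℂ)
    (Ψ : (i : ℕ) → Matrix (Fin N) (Fin (Nk i)) ℂ)
    (L s : ℝ) (Qc : Matrix (Fin N) (Fin N) ℂ)
    (X : (i : ℕ) → Matrix (Fin (Nk i)) (Fin (Nk i)) ℂ) : ℝ :=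
  Real.logb 2
    ((1 + ((1 / L) • (H * Qc * Hᴴ)) *
        (s • (1 : Matrix (Fin Mk) (Fin Mk) ℂ) +
          (1 / L) • (H * (∑ i ∈ Finset.Icc 1 k, Ψ i * X i * (Ψ i)ᴴ) * Hᴴ))⁻¹).det.re)

/-- The first-order approximation `R̃_{k,c}` of the common-message rate around the base
points `Xb` (equation (20) of the paper). -/
noncomputable def commonRateApprox (k N Mk : ℕ) (Nk : ℕ → ℕ)
    (H : Matrix (Fin Mk) (Fin N) ℂ)
    (Ψ : (i : ℕ) → Matrix (Fin N) (Fin (Nk i)) ℂ)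
    (L s : ℝ) (Qc : Matrix (Fin N) (Fin N) ℂ)
    (Xb X : (i : ℕ) → Matrix (Fin (Nk i)) (Fin (Nk i)) ℂ) : ℝ :=
  Real.logb 2
      ((1 + (1 / (L * s)) • (H * Qc * Hᴴ) + (1 / (L * s)) •
          (H * (∑ i ∈ Finset.Icc 1 k, Ψ i * X i * (Ψ i)ᴴ) * Hᴴ)).det.re)
    - Real.logb 2
      ((1 + (1 / (L * s)) •
          (H * (∑ i ∈ Finset.Icc 1 k, Ψ i * Xb i * (Ψ i)ᴴ) * Hᴴ)).det.re)
    - (1 / (L * s * Real.log 2)) *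
        ∑ i ∈ Finset.Icc 1 k,
          ((Ψ i)ᴴ * Hᴴ *
            ((1 : Matrix (Fin Mk) (Fin Mk) ℂ) + (1 / (L * s)) •
              (H * (∑ j ∈ Finset.Icc 1 k, Ψ j * Xb j * (Ψ j)ᴴ) * Hᴴ))⁻¹ *
            H * Ψ i * (X i - Xb i)).trace.re

theorem aux_quot {n : ℕ} (A P : Matrix (Fin n) (Fin n) ℂ) (L s : ℝ) (hL : 0 < L) (hs : 0 < s)
    (hA : A.PosSemidef) (hP : P.PosSemidef) :
    Real.logb 2 ((1 + ((1 / L) • A) * (s • (1 : Matrix (Fin n) (Fin n) ℂ) + (1 / L) • P)⁻¹).det.re)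
      = Real.logb 2 ((1 + (1 / (L * s)) • A + (1 / (L * s)) • P).det.re)
        - Real.logb 2 ((1 + (1 / (L * s)) • P).det.re) := by
  have hLs : 0 ≤ 1 / (L * s) := by positivity
  have hM : (1 + (1 / (L * s)) • P).PosDef := PosDef.one.add_posSemidef (hP.smul hLs)
  have hT : (1 + (1 / (L * s)) • A + (1 / (L * s)) • P).PosDef :=
    (PosDef.one.add_posSemidef (hA.smul hLs)).add_posSemidef (hP.smul hLs)
  have dM := hM.det_pos
  have dT := hT.det_pos
  have e1 : s • (1 : Matrix (Fin n) (Fin n) ℂ) + (1 / L) • P = s • (1 + (1 / (L * s)) • P) := by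
    rw [smul_add, smul_smul]; congr 2; field_simp
  have e2 : (1 / L) • A = s • ((1 / (L * s)) • A) := by
    rw [smul_smul]; congr 1; field_simp
  generalize hMd : (1 + (1 / (L * s)) • P) = M at *
  have hMu : IsUnit M.det := isUnit_iff_ne_zero.2 dM.ne'
  have e3 : 1 + ((1 / L) • A) * (s • M)⁻¹ = (1 + (1 / (L * s)) • A + (1 / (L * s)) • P) * M⁻¹ := by
    have hinv : (s • M)⁻¹ = s⁻¹ • M⁻¹ := by
      apply Matrix.inv_eq_right_inv
      rw [smul_mul_smul_comm, Matrix.mul_nonsing_inv _ hMu, mul_inv_cancel₀ hs.ne', one_smul]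
    have : (1 + (1 / (L * s)) • A + (1 / (L * s)) • P) = M + (1 / (L * s)) • A := by
      rw [← hMd]; abel
    rw [this, hinv, e2, add_mul, Matrix.mul_nonsing_inv _ hMu, smul_mul_smul_comm,
      mul_inv_cancel₀ hs.ne', one_smul]
  rw [e1, e3, det_mul, Matrix.det_nonsing_inv, Ring.inverse_eq_inv']
  generalize (1 + (1 / (L * s)) • A + (1 / (L * s)) • P).det = t at *
  generalize M.det = m at *
  obtain ⟨hm, hm'⟩ := Complex.pos_iff.1 dM
  obtain ⟨ht, ht'⟩ := Complex.pos_iff.1 dT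
  have : (t * m⁻¹).re = t.re / m.re := by
    have h1 : t = (t.re : ℂ) := Complex.ext rfl (by simp [← ht'])
    have h2 : m = (m.re : ℂ) := Complex.ext rfl (by simp [← hm'])
    rw [h1, h2, ← Complex.ofReal_inv, ← Complex.ofReal_mul, Complex.ofReal_re, Complex.ofReal_re,
      Complex.ofReal_re, div_eq_mul_inv]
  rw [this, Real.logb_div ht.ne' hm.ne']

theorem aux_log (x : ℝ) (hx : |x| ≤ 1 / 2) : |Real.log (1 + x) - x| ≤ 2 * x ^ 2 := by
  obtain ⟨h1, h2⟩ := abs_le.1 hx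
  have hp : 0 < 1 + x := by linarith
  have hu := Real.log_le_sub_one_of_pos hp
  have hl := Real.one_sub_inv_le_log_of_pos hp
  have : 1 - (1 + x)⁻¹ - x = - (x ^ 2 / (1 + x)) := by field_simp; ring
  rw [abs_le]
  constructor
  · have : x ^ 2 / (1 + x) ≤ 2 * x ^ 2 := by
      rw [div_le_iff₀ hp]; nlinarith [sq_nonneg x]
    linarith
  · nlinarith [sq_nonneg x]

theorem aux_det {n : ℕ} (M D : Matrix (Fin n) (Fin n) ℂ) (hM : M.PosDef) :
    ∃ c > (0 : ℝ), ∃ δ > (0 : ℝ), ∀ h : ℝ, 0 < h → h < δ →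
      |Real.log ((M + h • D).det.re) - Real.log (M.det.re) - h * (M⁻¹ * D).trace.re|
        ≤ c * h ^ 2 := by
  have dM := hM.det_pos
  have hMu : IsUnit M.det := isUnit_iff_ne_zero.2 dM.ne'
  obtain ⟨hm, hm'⟩ := Complex.pos_iff.1 dM
  obtain ⟨q, hq⟩ : ∃ q : Polynomial ℂ, ∀ h : ℝ, (1 + (h : ℂ) • (M⁻¹ * D)).det
      = 1 + (M⁻¹ * D).trace * h + q.eval (h : ℂ) * (h : ℂ) ^ 2 :=
    ⟨_, fun h => Matrix.det_one_add_smul (h : ℂ) (M⁻¹ * D)⟩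
  obtain ⟨B, hB⟩ := (isCompact_Icc (a := (0 : ℝ)) (b := 1)).exists_bound_of_continuousOn
    (f := fun h : ℝ => (q.eval (h : ℂ)).re) (by fun_prop)
  set a := (M⁻¹ * D).trace.re with ha
  have hB0 : 0 ≤ B := (norm_nonneg _).trans (hB 0 (by simp))
  set C := |a| + B + 1 with hC
  have hCpos : 1 ≤ C := by have := abs_nonneg a; linarith
  refine ⟨2 * C ^ 2 + B, by positivity, 1 / (2 * C), by positivity, fun h h0 hd => ?_⟩
  have hCh : C * h ≤ 1 / 2 := by
    rw [lt_div_iff₀ (by positivity)] at hd; nlinarith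
  have h1 : h ≤ 1 := by nlinarith
  have hb := hB h ⟨h0.le, h1⟩
  rw [Real.norm_eq_abs] at hb
  set b := (q.eval (h : ℂ)).re
  set x := a * h + b * h ^ 2 with hx
  have hdet : (M + h • D).det.re = M.det.re * (1 + x) := by
    have : M + h • D = M * (1 + (h : ℂ) • (M⁻¹ * D)) := by
      rw [mul_add, mul_one, Matrix.mul_smul, ← Matrix.mul_assoc, Matrix.mul_nonsing_inv _ hMu,
        Matrix.one_mul]; rfl
    rw [this, det_mul, hq, Complex.mul_re, ← hm', zero_mul, sub_zero, ← Complex.ofReal_pow]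
    rw [Complex.add_re, Complex.add_re, Complex.re_mul_ofReal, Complex.re_mul_ofReal, Complex.one_re,
      hx, add_assoc]
  have hxb : |x| ≤ C * h := by
    calc |x| ≤ |a * h| + |b * h ^ 2| := abs_add_le _ _
      _ = |a| * h + |b| * h ^ 2 := by rw [abs_mul, abs_mul, abs_of_pos h0, abs_of_pos (pow_pos h0 2)]
      _ ≤ C * h := by rw [hC]; nlinarith [mul_le_mul_of_nonneg_right hb (sq_nonneg h), mul_nonneg hB0 h0.le]
  have hx2 : |x| ≤ 1 / 2 := hxb.trans hCh
  have hxp : 0 < 1 + x := by linarith [(abs_le.1 hx2).1]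
  rw [hdet, Real.log_mul hm.ne' hxp.ne']
  have hl := aux_log x hx2
  have hxs : x ^ 2 ≤ C ^ 2 * h ^ 2 := by
    rw [← sq_abs, ← mul_pow]; gcongr
  have hbh : |b * h ^ 2| ≤ B * h ^ 2 := by
    rw [abs_mul, abs_of_pos (pow_pos h0 2)]; gcongr
  calc _ = |(Real.log (1 + x) - x) + b * h ^ 2| := by congr 1; rw [hx]; ring
    _ ≤ _ := abs_add_le _ _
    _ ≤ _ := by linarith

/-- Proposition 2, common-message part: along Hermitian directions `V` that keep the matrices
positive semi-definite, `R̃_{k,c}` approximates `R_{k,c}` to first order, with quadratic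
error in `h`. -/
theorem commonRate_first_order (K k N Mk : ℕ) (hK : 1 ≤ K) (hk1 : 1 ≤ k) (hkK : k ≤ K)
    (hN : 0 < N) (hMk : 0 < Mk)
    (Nk : ℕ → ℕ) (hNk : ∀ i ∈ Finset.Icc 1 k, 0 < Nk i)
    (H : Matrix (Fin Mk) (Fin N) ℂ)
    (Ψ : (i : ℕ) → Matrix (Fin N) (Fin (Nk i)) ℂ)
    (L s : ℝ) (hL : 0 < L) (hs : 0 < s)
    (Qc : Matrix (Fin N) (Fin N) ℂ) (hQc : Qc.PosSemidef)
    (Xb V : (i : ℕ) → Matrix (Fin (Nk i)) (Fin (Nk i)) ℂ)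
    (hXb : ∀ i ∈ Finset.Icc 1 k, (Xb i).PosSemidef)
    (hV : ∀ i ∈ Finset.Icc 1 k, (V i).IsHermitian) :
    ∃ c > (0 : ℝ), ∃ δ > (0 : ℝ), ∀ h : ℝ, 0 < h → h < δ →
      (∀ i ∈ Finset.Icc 1 k, (Xb i + h • V i).PosSemidef) →
      |commonRate k N Mk Nk H Ψ L s Qc (fun i => Xb i + h • V i)
          - commonRateApprox k N Mk Nk H Ψ L s Qc Xb (fun i => Xb i + h • V i)|
        ≤ c * h ^ 2 := by
  set r : ℝ := 1 / (L * s) with hr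
  have hr0 : 0 ≤ r := by positivity
  have psd : ∀ X : (i : ℕ) → Matrix (Fin (Nk i)) (Fin (Nk i)) ℂ,
      (∀ i ∈ Finset.Icc 1 k, (X i).PosSemidef) →
      (H * (∑ i ∈ Finset.Icc 1 k, Ψ i * X i * (Ψ i)ᴴ) * Hᴴ).PosSemidef := fun X hX =>
    (Matrix.posSemidef_sum _ fun i hi => (hX i hi).mul_mul_conjTranspose_same _).mul_mul_conjTranspose_same _
  have hM : (1 + r • (H * (∑ i ∈ Finset.Icc 1 k, Ψ i * Xb i * (Ψ i)ᴴ) * Hᴴ)).PosDef :=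
    PosDef.one.add_posSemidef ((psd Xb hXb).smul hr0)
  obtain ⟨c, hc, δ, hδ, hmain⟩ := aux_det _
    (r • (H * (∑ i ∈ Finset.Icc 1 k, Ψ i * V i * (Ψ i)ᴴ) * Hᴴ)) hM
  have hl2 : 0 < Real.log 2 := Real.log_pos one_lt_two
  refine ⟨c / Real.log 2, by positivity, δ, hδ, fun h h0 hd hX => ?_⟩
  have hm := hmain h h0 hd
  unfold commonRate commonRateApprox
  rw [aux_quot _ _ L s hL hs (hQc.mul_mul_conjTranspose_same H) (psd _ hX), ← hr]
  have hsum : 1 + r • (H * (∑ i ∈ Finset.Icc 1 k, Ψ i * (Xb i + h • V i) * (Ψ i)ᴴ) * Hᴴ)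
      = 1 + r • (H * (∑ i ∈ Finset.Icc 1 k, Ψ i * Xb i * (Ψ i)ᴴ) * Hᴴ)
        + h • (r • (H * (∑ i ∈ Finset.Icc 1 k, Ψ i * V i * (Ψ i)ᴴ) * Hᴴ)) := by
    simp only [Matrix.mul_add, Matrix.add_mul, Finset.sum_add_distrib, Matrix.mul_smul,
      Matrix.smul_mul, ← Finset.smul_sum, smul_add]
    rw [smul_comm h r, add_assoc]
  rw [hsum]
  generalize 1 + r • (H * (∑ i ∈ Finset.Icc 1 k, Ψ i * Xb i * (Ψ i)ᴴ) * Hᴴ) = M at *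
  have htr : ∑ i ∈ Finset.Icc 1 k,
      ((Ψ i)ᴴ * Hᴴ * M⁻¹ * H * Ψ i * (Xb i + h • V i - Xb i)).trace.re
      = h * (M⁻¹ * (H * (∑ i ∈ Finset.Icc 1 k, Ψ i * V i * (Ψ i)ᴴ) * Hᴴ)).trace.re := by
    rw [Matrix.mul_sum, Matrix.sum_mul, Matrix.mul_sum, Matrix.trace_sum, Complex.re_sum,
      Finset.mul_sum]
    refine Finset.sum_congr rfl fun i _ => ?_
    rw [add_sub_cancel_left, Matrix.mul_smul, Matrix.trace_smul, Complex.smul_re, smul_eq_mul]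
    congr 2
    have e : (Ψ i)ᴴ * Hᴴ * M⁻¹ * H * Ψ i * V i = ((Ψ i)ᴴ * Hᴴ) * (M⁻¹ * H * Ψ i * V i) := by
      simp only [Matrix.mul_assoc]
    rw [e, Matrix.trace_mul_comm]
    simp only [Matrix.mul_assoc]
  rw [htr]
  rw [Matrix.mul_smul, Matrix.trace_smul, Complex.smul_re, smul_eq_mul] at hm
  set τ := (M⁻¹ * (H * (∑ i ∈ Finset.Icc 1 k, Ψ i * V i * (Ψ i)ᴴ) * Hᴴ)).trace.re
  have hr2 : 1 / (L * s * Real.log 2) = r / Real.log 2 := by rw [hr, div_div]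
  rw [hr2]
  simp only [Real.logb]
  rw [← abs_neg]
  have hdiv := div_le_div_of_nonneg_right hm hl2.le
  rw [← abs_of_pos hl2, ← abs_div, abs_of_pos hl2] at hdiv
  refine le_of_eq_of_le ?_ (hdiv.trans_eq (by rw [div_mul_eq_mul_div]))
  congr 1
  ring
end

section
/- Let K ≥ 1 and k ∈ {2,…,K}; fix positive integers N and M_1,…,M_{k−1} with Σ_{j<k} M_j < N. Let H_j ∈ ℂ^{M_j×N} and H̄_j ∈ ℂ^{M_j×N} for j = 1,…,k, set ΔH_j = H̄_j − H_j, and let L_k > 0. For k' = 2,…,k−1 define the stacked matrices F_{k'} = [H_1; …; H_{k'−1}] and F̄_{k'} = [H̄_1; …; H̄_{k'−1}] (of size (Σ_{j<k'}M_j)×N) and ΔF_{k'} = F̄_{k'} − F_{k'}; assume each F_{k'} and F̄_{k'} has full row rank; set Ψ_1 = Ψ̄_1 = I_N. Then for each k' ∈ {2,…,k−1} there exist matrices Ψ_{k'}, Ψ̄_{k'} ∈ ℂ^{N×N_{k'}} (N_{k'} = N − Σ_{j<k'}M_j) with orthonormal columns satisfying F_{k'}Ψ_{k'} = 0 and F̄_{k'}Ψ̄_{k'}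 = 0, such that, setting C_{k'} = Ψ_{k'}^H (ΔF_{k'})^H (F̄_{k'}F̄_{k'}^H)^{-1} ΔF_{k'} Ψ_{k'} (and C_1 = 0), whenever ‖C_{k'}‖ < 1 for all k' ∈ {1,…,k−1}, the following holds for all vectors w_{k'} ∈ ℂ^{N_{k'}}: ‖ (1/√L_k) H_k Σ_{k'=1}^{k−1} (Ψ̄_{k'} − Ψ_{k'}) w_{k'} ‖₂ ≤ (1/√L_k) ‖H_k‖ Σ_{k'=1}^{k−1} [ ‖F̄_{k'}^+‖ ‖ΔF_{k'}‖ − ln(1 − ‖C_{k'}‖) ] ‖w_{k'}‖₂. -/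
open Matrix
open scoped ComplexOrder

/-- The spectral norm (ℓ²-induced operator norm) of a complex matrix. -/
noncomputable def specNorm {m n : Type*} [Fintype m] [Fintype n] [DecidableEq n]
    (A : Matrix m n ℂ) : ℝ :=
  ‖LinearMap.toContinuousLinearMap (Matrix.toEuclideanLin A)‖

/-- The Euclidean norm of a complex vector. -/
noncomputable def vecNorm {n : Type*} [Fintype n] (v : n → ℂ) : ℝ :=
  Real.sqrt (∑ i, ‖v i‖ ^ 2)

/-- The stacked (augmented) channel matrix `F_i = [H_1; …; H_{i−1}]` of the first `i−1`
users, with rows indexed by the sigma type `(j : Fin (i−1)) × Fin (M (j+1))`. -/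
def stackMat (N : ℕ) (M : ℕ → ℕ) (H : (j : ℕ) → Matrix (Fin (M j)) (Fin N) ℂ) (i : ℕ) :
    Matrix ((j : Fin (i - 1)) × Fin (M (j.val + 1))) (Fin N) ℂ :=
  Matrix.of fun p c => H (p.1.val + 1) p.2 c

section Helpers
open scoped Matrix.Norms.L2Operator MatrixOrder

lemma specNorm_eq_aux {m n : Type*} [Fintype m] [Fintype n] [DecidableEq n]
    (A : Matrix m n ℂ) : specNorm A = ‖A‖ := rfl

lemma vecNorm_eq_aux {n : Type*} [Fintype n] (v : n → ℂ) :
    vecNorm v = ‖(WithLp.toLp 2 v : EuclideanSpace ℂ n)‖ := by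
  rw [EuclideanSpace.norm_eq]; rfl

lemma vecNorm_mulVec_aux {m n : Type*} [Fintype m] [Fintype n] [DecidableEq n]
    (A : Matrix m n ℂ) (v : n → ℂ) : vecNorm (A *ᵥ v) ≤ ‖A‖ * vecNorm v := by
  rw [vecNorm_eq_aux, vecNorm_eq_aux]
  exact Matrix.l2_opNorm_mulVec A (WithLp.toLp 2 v)

lemma norm_le_one_aux {m n : Type*} [Fintype m] [Fintype n] [DecidableEq n]
    (A : Matrix m n ℂ) (h : Aᴴ * A = 1) : ‖A‖ ≤ 1 := by
  have h1 := Matrix.l2_opNorm_conjTranspose_mul_self (1 : Matrix n n ℂ)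
  have h2 := Matrix.l2_opNorm_conjTranspose_mul_self A
  rw [h] at h2
  rw [conjTranspose_one, one_mul] at h1
  have h3 := norm_nonneg A
  have h4 := norm_nonneg (1 : Matrix n n ℂ)
  have h5 : ‖(1 : Matrix n n ℂ)‖ ≤ 1 := by
    by_contra hlt
    push Not at hlt
    nlinarith
  rw [h2] at h5
  nlinarith

lemma sqrt_aux {n : Type*} [Fintype n] [DecidableEq n] (C : Matrix n n ℂ)
    (hp : (1 - C).PosSemidef) : ∃ S : Matrix n n ℂ, Sᴴ = S ∧ S * S = 1 - C ∧ ‖1 - S‖ ≤ ‖C‖ := by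
  have h0 : 0 ≤ 1 - C := Matrix.nonneg_iff_posSemidef.2 hp
  have hS0 := CFC.sqrt_nonneg (1 - C)
  have hSS := CFC.sqrt_mul_sqrt_self (1 - C) h0
  generalize CFC.sqrt (1 - C) = S at *
  have hps := Matrix.nonneg_iff_posSemidef.1 hS0
  have hSH : Sᴴ = S := hps.1
  refine ⟨S, hSH, hSS, ?_⟩
  have hXH : (1 - S)ᴴ = 1 - S := by simp [hSH]
  have hC : C = 1 - S * S := by rw [hSS]; abel
  have hCH : Cᴴ = C := by rw [hC]; simp [hSH]
  have hSS' : (1 - C).PosSemidef := hp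
  have key : ((1 - S)ᴴ * (S + S + (1 - C)) * (1 - S)).PosSemidef :=
    ((hps.add hps).add hp).conjTranspose_mul_mul_same _
  have hle : (1 - S)ᴴ * (1 - S) ≤ Cᴴ * C := by
    rw [Matrix.le_iff]
    have he : Cᴴ * C - (1 - S)ᴴ * (1 - S) = (1 - S)ᴴ * (S + S + (1 - C)) * (1 - S) := by
      rw [hXH, hCH, hC]
      noncomm_ring
    rw [he]
    exact key
  have hn := CStarAlgebra.norm_le_norm_of_nonneg_of_le
    (Matrix.nonneg_iff_posSemidef.2 (Matrix.posSemidef_conjTranspose_mul_self (1 - S))) hle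
  rw [Matrix.l2_opNorm_conjTranspose_mul_self, Matrix.l2_opNorm_conjTranspose_mul_self] at hn
  exact abs_le_of_sq_le_sq' (by nlinarith) (norm_nonneg _) |>.2

lemma null_basis_aux {m : Type*} [Fintype m] [DecidableEq m] {N n : ℕ}
    (F : Matrix m (Fin N) ℂ) (hr : F.rank = Fintype.card m) (hn : n = N - Fintype.card m) :
    ∃ Ψ : Matrix (Fin N) (Fin n) ℂ, Ψᴴ * Ψ = 1 ∧ F * Ψ = 0 := by
  have hrank : F.rank = Module.finrank ℂ (LinearMap.range (Matrix.toEuclideanLin F)) := by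
    rw [Matrix.toEuclideanLin_eq_toLin]
    exact Matrix.rank_eq_finrank_range_toLin _ _ _
  have hfin : Module.finrank ℂ (LinearMap.ker (Matrix.toEuclideanLin F)) = n := by
    have := LinearMap.finrank_range_add_finrank_ker (Matrix.toEuclideanLin F)
    rw [finrank_euclideanSpace_fin] at this
    omega
  let b := (stdOrthonormalBasis ℂ (LinearMap.ker (Matrix.toEuclideanLin F))).reindex
    (finCongr hfin)
  refine ⟨Matrix.of fun r c => (b c : EuclideanSpace ℂ (Fin N)) r, ?_, ?_⟩
  · ext i j
    have h := orthonormal_iff_ite.1 b.orthonormal i j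
    rw [Submodule.coe_inner, PiLp.inner_apply] at h
    rw [Matrix.mul_apply, Matrix.one_apply, ← h]
    refine Finset.sum_congr rfl fun r _ => ?_
    simp [mul_comm]
  · ext i j
    have h : Matrix.toEuclideanLin F (b j : EuclideanSpace ℂ (Fin N)) = 0 :=
      LinearMap.mem_ker.1 (b j).2
    have h2 := congrArg (fun v : EuclideanSpace ℂ m => v i) h
    exact h2

lemma isUnit_aux {m : Type*} [Fintype m] [DecidableEq m] {N : ℕ}
    (F : Matrix m (Fin N) ℂ) (hr : F.rank = Fintype.card m) : IsUnit (F * Fᴴ) := by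
  have h : (F * Fᴴ).rank = Fintype.card m := by rw [Matrix.rank_self_mul_conjTranspose, hr]
  have hs : Function.Surjective (F * Fᴴ).mulVecLin := by
    rw [← LinearMap.range_eq_top]
    apply Submodule.eq_top_of_finrank_eq
    rw [Module.finrank_fintype_fun_eq_card]
    exact h
  exact Matrix.mulVec_surjective_iff_isUnit.1 hs

lemma pair_aux {m : Type*} [Fintype m] [DecidableEq m] {N n : ℕ}
    (F Fb : Matrix m (Fin N) ℂ) (hr : F.rank = Fintype.card m) (hrb : Fb.rank = Fintype.card m)
    (hn : n = N - Fintype.card m) :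
    ∃ Ψ Ψb : Matrix (Fin N) (Fin n) ℂ, (Ψᴴ * Ψ = 1 ∧ Ψbᴴ * Ψb = 1 ∧ F * Ψ = 0 ∧ Fb * Ψb = 0) ∧
      (‖Ψᴴ * (Fb - F)ᴴ * (Fb * Fbᴴ)⁻¹ * (Fb - F) * Ψ‖ < 1 →
        ‖Ψb - Ψ‖ ≤ ‖Fbᴴ * (Fb * Fbᴴ)⁻¹‖ * ‖Fb - F‖
          + ‖Ψᴴ * (Fb - F)ᴴ * (Fb * Fbᴴ)⁻¹ * (Fb - F) * Ψ‖) := by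
  obtain ⟨Ψ, hΨ, hF⟩ := null_basis_aux F hr hn
  set C := Ψᴴ * (Fb - F)ᴴ * (Fb * Fbᴴ)⁻¹ * (Fb - F) * Ψ with hC
  by_cases hc : ‖C‖ < 1
  swap
  · obtain ⟨Ψb, hΨb, hFb⟩ := null_basis_aux Fb hrb hn
    exact ⟨Ψ, Ψb, ⟨hΨ, hΨb, hF, hFb⟩, fun h => absurd h hc⟩
  have hG := isUnit_aux Fb hrb
  have hGd := (Matrix.isUnit_iff_isUnit_det _).1 hG
  have hGH : ((Fb * Fbᴴ)⁻¹)ᴴ = (Fb * Fbᴴ)⁻¹ := by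
    rw [Matrix.conjTranspose_nonsing_inv]; simp
  have hGi : Fb * Fbᴴ * (Fb * Fbᴴ)⁻¹ = 1 := Matrix.mul_nonsing_inv _ hGd
  have hD : (Fb - F) * Ψ = Fb * Ψ := by rw [Matrix.sub_mul, hF, sub_zero]
  set G := (Fb * Fbᴴ)⁻¹ with hGdef
  set P := Fbᴴ * G * Fb with hP
  have hPH : Pᴴ = P := by simp [hP, hGH, Matrix.mul_assoc]
  have hFP : Fb * P = Fb := by
    rw [hP, ← Matrix.mul_assoc, ← Matrix.mul_assoc, hGi, Matrix.one_mul]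
  have hPP : P * P = P := by
    conv_lhs => rw [hP, Matrix.mul_assoc, hFP]
  have hCP : C = Ψᴴ * P * Ψ := by
    rw [hC, ← Matrix.conjTranspose_mul, hD, Matrix.mul_assoc _ (Fb - F), hD, hP]
    simp only [Matrix.conjTranspose_mul, Matrix.mul_assoc]
  set T := Ψ - P * Ψ with hT
  have hTT : Tᴴ * T = 1 - C := by
    rw [hT, hCP, Matrix.conjTranspose_sub, Matrix.conjTranspose_mul, hPH, Matrix.sub_mul,
      Matrix.mul_sub, Matrix.mul_sub, hΨ, Matrix.mul_assoc Ψᴴ P (P * Ψ), ← Matrix.mul_assoc P P,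
      hPP, ← Matrix.mul_assoc, sub_self, sub_zero]
  have hps : (1 - C).PosSemidef := hTT ▸ Matrix.posSemidef_conjTranspose_mul_self T
  obtain ⟨S, hSH, hSS, hSn⟩ := sqrt_aux C hps
  have hu : IsUnit (1 - C) := isUnit_one_sub_of_norm_lt_one hc
  have hSu : IsUnit S.det := by
    have h := (Matrix.isUnit_iff_isUnit_det _).1 hu
    rw [← hSS, Matrix.det_mul] at h
    exact isUnit_of_mul_isUnit_left h
  have hFT : Fb * T = 0 := by
    rw [hT, Matrix.mul_sub, ← Matrix.mul_assoc, hFP, sub_self]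
  have hSS1 := Matrix.nonsing_inv_mul _ hSu
  have hSS2 := Matrix.mul_nonsing_inv _ hSu
  have hiso : (T * S⁻¹)ᴴ * (T * S⁻¹) = 1 := by
    rw [Matrix.conjTranspose_mul, Matrix.conjTranspose_nonsing_inv, hSH, Matrix.mul_assoc,
      ← Matrix.mul_assoc Tᴴ, hTT, ← hSS, Matrix.mul_assoc S S, hSS2, Matrix.mul_one, hSS1]
  refine ⟨Ψ, T * S⁻¹, ⟨hΨ, hiso, hF, ?_⟩, fun _ => ?_⟩
  · rw [← Matrix.mul_assoc, hFT, Matrix.zero_mul]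
  have hdec : T * S⁻¹ - Ψ = (T * S⁻¹) * (1 - S) - Fbᴴ * G * (Fb - F) * Ψ := by
    rw [Matrix.mul_sub, Matrix.mul_one, Matrix.mul_assoc T, hSS1, Matrix.mul_one,
      Matrix.mul_assoc _ (Fb - F), hD, hT, hP]
    simp only [Matrix.mul_assoc]
    abel
  rw [hdec]
  have a1 : ‖(T * S⁻¹) * (1 - S)‖ ≤ ‖C‖ := by
    refine (Matrix.l2_opNorm_mul _ _).trans ?_
    have := norm_le_one_aux _ hiso
    nlinarith [norm_nonneg (1 - S), norm_nonneg (T * S⁻¹)]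
  have a2 : ‖Fbᴴ * G * (Fb - F) * Ψ‖ ≤ ‖Fbᴴ * G‖ * ‖Fb - F‖ := by
    refine (Matrix.l2_opNorm_mul _ _).trans ?_
    have h1 := norm_le_one_aux _ hΨ
    have h2 := Matrix.l2_opNorm_mul (Fbᴴ * G) (Fb - F)
    nlinarith [norm_nonneg (Fbᴴ * G * (Fb - F)), norm_nonneg Ψ]
  refine (norm_sub_le _ _).trans ?_
  linarith

lemma card_aux (M : ℕ → ℕ) (i : ℕ) :
    Fintype.card ((j : Fin (i - 1)) × Fin (M (j.val + 1))) = ∑ j ∈ Finset.Icc 1 (i - 1), M j := by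
  rw [Fintype.card_sigma]
  simp only [Fintype.card_fin]
  rw [Fin.sum_univ_eq_sum_range (fun j => M (j + 1)), Finset.range_eq_Ico,
    Finset.sum_Ico_add' M 0 (i - 1) 1]
  congr 1

lemma vecNorm_sum_aux {n ι : Type*} [Fintype n] (s : Finset ι) (f : ι → n → ℂ) :
    vecNorm (∑ i ∈ s, f i) ≤ ∑ i ∈ s, vecNorm (f i) := by
  simp only [vecNorm_eq_aux, WithLp.toLp_sum]
  exact norm_sum_le _ _

lemma vecNorm_smul_aux {n : Type*} [Fintype n] (c : ℝ) (hc : 0 ≤ c) (f : n → ℂ) :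
    vecNorm (c • f) = c * vecNorm f := by
  simp only [vecNorm_eq_aux, WithLp.toLp_smul, norm_smul, Real.norm_of_nonneg hc]

lemma log_aux (c : ℝ) (h : c < 1) : c ≤ - Real.log (1 - c) := by
  have := Real.log_le_sub_one_of_pos (sub_pos.2 h)
  linarith


lemma pair_aux2 {m : Type*} [Fintype m] [DecidableEq m] {N n : ℕ}
    (F Fb : Matrix m (Fin N) ℂ) (hr : F.rank = Fintype.card m) (hrb : Fb.rank = Fintype.card m)
    (hn : n = N - Fintype.card m) :
    ∃ Ψ Ψb : Matrix (Fin N) (Fin n) ℂ, (Ψᴴ * Ψ = 1 ∧ Ψbᴴ * Ψb = 1 ∧ F * Ψ = 0 ∧ Fb * Ψb = 0) ∧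
      (specNorm (Ψᴴ * (Fb - F)ᴴ * (Fb * Fbᴴ)⁻¹ * (Fb - F) * Ψ) < 1 →
        specNorm (Ψb - Ψ) ≤ specNorm (Fbᴴ * (Fb * Fbᴴ)⁻¹) * specNorm (Fb - F)
          + specNorm (Ψᴴ * (Fb - F)ᴴ * (Fb * Fbᴴ)⁻¹ * (Fb - F) * Ψ)) :=
  pair_aux F Fb hr hrb hn

lemma vecNorm_mulVec_aux2 {m n : Type*} [Fintype m] [Fintype n] [DecidableEq n]
    (A : Matrix m n ℂ) (v : n → ℂ) : vecNorm (A *ᵥ v) ≤ specNorm A * vecNorm v :=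
  vecNorm_mulVec_aux A v

lemma specNorm_zero_aux {m n : Type*} [Fintype m] [Fintype n] [DecidableEq n] :
    specNorm (0 : Matrix m n ℂ) = 0 := by
  rw [specNorm_eq_aux, norm_zero]

lemma specNorm_nonneg_aux {m n : Type*} [Fintype m] [Fintype n] [DecidableEq n]
    (A : Matrix m n ℂ) : 0 ≤ specNorm A := norm_nonneg _

end Helpers

/-- Bound (32) of Proposition 3: the additional inter-user interference `Ξ↓_k` caused to
user `k` by users `1,…,k−1` under SNS precoding with imperfect CSI. There exist orthonormal
null-space bases `Ψ_{k'}` of `F_{k'}` and `Ψ̄_{k'}` of `F̄_{k'}` (with `Ψ_1 = Ψ̄_1 = I_N`)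
such that, whenever `‖C_{k'}‖ < 1` for all `k'`,
`‖(1/√L_k) H_k Σ_{k'<k} (Ψ̄_{k'} − Ψ_{k'}) w_{k'}‖₂
  ≤ (1/√L_k) ‖H_k‖ Σ_{k'<k} [‖F̄_{k'}⁺‖ ‖ΔF_{k'}‖ − ln(1 − ‖C_{k'}‖)] ‖w_{k'}‖₂`. -/
theorem interference_down_bound (K k N : ℕ) (hk : 2 ≤ k) (hkK : k ≤ K)
    (M : ℕ → ℕ) (hM : ∀ j ∈ Finset.Icc 1 (k - 1), 0 < M j)
    (hsum : ∑ j ∈ Finset.Icc 1 (k - 1), M j < N)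
    (H Hb : (j : ℕ) → Matrix (Fin (M j)) (Fin N) ℂ)
    (Lk : ℝ) (hLk : 0 < Lk)
    (hFrank : ∀ i ∈ Finset.Icc 2 (k - 1),
      (stackMat N M H i).rank = Fintype.card ((j : Fin (i - 1)) × Fin (M (j.val + 1))))
    (hFbrank : ∀ i ∈ Finset.Icc 2 (k - 1),
      (stackMat N M Hb i).rank = Fintype.card ((j : Fin (i - 1)) × Fin (M (j.val + 1)))) :
    ∃ Ψ Ψb : (i : ℕ) → Matrix (Fin N) (Fin (N - ∑ j ∈ Finset.Icc 1 (i - 1), M j)) ℂ,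
      Ψ 1 = (1 : Matrix (Fin N) (Fin N) ℂ) ∧
      Ψb 1 = (1 : Matrix (Fin N) (Fin N) ℂ) ∧
      (∀ i ∈ Finset.Icc 2 (k - 1),
        (Ψ i)ᴴ * Ψ i = 1 ∧ (Ψb i)ᴴ * Ψb i = 1 ∧
        stackMat N M H i * Ψ i = 0 ∧ stackMat N M Hb i * Ψb i = 0) ∧
      ((∀ i ∈ Finset.Icc 1 (k - 1),
          specNorm ((Ψ i)ᴴ * (stackMat N M Hb i - stackMat N M H i)ᴴ *
              (stackMat N M Hb i * (stackMat N M Hb i)ᴴ)⁻¹ *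
              (stackMat N M Hb i - stackMat N M H i) * Ψ i) < 1) →
        ∀ w : (i : ℕ) → Fin (N - ∑ j ∈ Finset.Icc 1 (i - 1), M j) → ℂ,
          vecNorm ((1 / Real.sqrt Lk) •
              (H k).mulVec (∑ i ∈ Finset.Icc 1 (k - 1), (Ψb i - Ψ i).mulVec (w i)))
            ≤ (1 / Real.sqrt Lk) * specNorm (H k) *
                ∑ i ∈ Finset.Icc 1 (k - 1),
                  (specNorm ((stackMat N M Hb i)ᴴ *
                        (stackMat N M Hb i * (stackMat N M Hb i)ᴴ)⁻¹) *
                      specNorm (stackMat N M Hb i - stackMat N M H i)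
                    - Real.log (1 -
                        specNorm ((Ψ i)ᴴ * (stackMat N M Hb i - stackMat N M H i)ᴴ *
                          (stackMat N M Hb i * (stackMat N M Hb i)ᴴ)⁻¹ *
                          (stackMat N M Hb i - stackMat N M H i) * Ψ i))) *
                    vecNorm (w i)) := by
  have hex : ∀ i : ℕ, ∃ Ψ Ψb : Matrix (Fin N) (Fin (N - ∑ j ∈ Finset.Icc 1 (i - 1), M j)) ℂ,
      i ∈ Finset.Icc 2 (k - 1) →
      (Ψᴴ * Ψ = 1 ∧ Ψbᴴ * Ψb = 1 ∧ stackMat N M H i * Ψ = 0 ∧ stackMat N M Hb i * Ψb = 0) ∧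
      (specNorm (Ψᴴ * (stackMat N M Hb i - stackMat N M H i)ᴴ *
          (stackMat N M Hb i * (stackMat N M Hb i)ᴴ)⁻¹ *
          (stackMat N M Hb i - stackMat N M H i) * Ψ) < 1 →
        specNorm (Ψb - Ψ) ≤ specNorm ((stackMat N M Hb i)ᴴ * (stackMat N M Hb i * (stackMat N M Hb i)ᴴ)⁻¹) *
            specNorm (stackMat N M Hb i - stackMat N M H i)
          + specNorm (Ψᴴ * (stackMat N M Hb i - stackMat N M H i)ᴴ *
          (stackMat N M Hb i * (stackMat N M Hb i)ᴴ)⁻¹ *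
          (stackMat N M Hb i - stackMat N M H i) * Ψ)) := by
    intro i
    by_cases hi : i ∈ Finset.Icc 2 (k - 1)
    · obtain ⟨Ψ, Ψb, h⟩ := pair_aux2 (stackMat N M H i) (stackMat N M Hb i) (hFrank i hi)
        (hFbrank i hi) (n := N - ∑ j ∈ Finset.Icc 1 (i - 1), M j) (by rw [card_aux])
      exact ⟨Ψ, Ψb, fun _ => h⟩
    · exact ⟨0, 0, fun h => absurd h hi⟩
  choose Φ Φb hΦ using hex
  have hne : ∀ i ∈ Finset.Icc 2 (k - 1), i ≠ 1 := by
    intro i hi h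
    have := (Finset.mem_Icc.1 hi).1
    omega
  have hupd : ∀ Φ : (i : ℕ) → Matrix (Fin N) (Fin (N - ∑ j ∈ Finset.Icc 1 (i - 1), M j)) ℂ,
      ∃ f : (i : ℕ) → Matrix (Fin N) (Fin (N - ∑ j ∈ Finset.Icc 1 (i - 1), M j)) ℂ,
        f 1 = (1 : Matrix (Fin N) (Fin N) ℂ) ∧ ∀ i, i ≠ 1 → f i = Φ i := fun Φ =>
    ⟨Function.update Φ 1 (1 : Matrix (Fin N) (Fin N) ℂ), Function.update_self ..,
      fun i h => Function.update_of_ne h ..⟩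
  obtain ⟨f, hf1, hf⟩ := hupd Φ
  obtain ⟨g, hg1, hg⟩ := hupd Φb
  refine ⟨f, g, hf1, hg1, ?_, ?_⟩
  · intro i hi
    rw [hf i (hne i hi), hg i (hne i hi)]
    exact (hΦ i hi).1
  · intro hC w
    rw [vecNorm_smul_aux _ (by positivity), mul_assoc]
    refine mul_le_mul_of_nonneg_left ?_ (by positivity)
    refine (vecNorm_mulVec_aux2 _ _).trans ?_
    refine mul_le_mul_of_nonneg_left ?_ (specNorm_nonneg_aux _)
    refine (vecNorm_sum_aux _ _).trans (Finset.sum_le_sum fun i hi => ?_)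
    refine (vecNorm_mulVec_aux2 _ _).trans (mul_le_mul_of_nonneg_right ?_ (Real.sqrt_nonneg _))
    have hCi := hC i hi
    have hlog := log_aux _ hCi
    refine le_trans ?_ (add_le_add_right hlog _)
    by_cases h1 : i = 1
    · subst h1
      have hfg : g 1 = f 1 := hg1.trans hf1.symm
      rw [hfg, sub_self, specNorm_zero_aux]
      exact add_nonneg (mul_nonneg (specNorm_nonneg_aux _) (specNorm_nonneg_aux _))
        (specNorm_nonneg_aux _)
    · have hi2 : i ∈ Finset.Icc 2 (k - 1) := by
        rw [Finset.mem_Icc] at hi ⊢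
        omega
      rw [hf i h1] at hCi
      rw [hf i h1, hg i h1]
      exact (hΦ i hi2).2 hCi
end

section
/- Let m < n be positive integers, and let A, Ā ∈ ℂ^{m×n} both have full row rank; set ΔA = Ā − A. Let Ψ ∈ ℂ^{n×(n−m)} be any matrix with orthonormal columns satisfying AΨ = 0, and set C = Ψ^H (ΔA)^H (ĀĀ^H)^{-1} ΔA Ψ. Then there exists a matrix Ψ̄ ∈ ℂ^{n×(n−m)} with orthonormal columns satisfying ĀΨ̄ = 0 such that, if ‖C‖ < 1, then ‖Ψ̄ − Ψ‖ ≤ ‖Ā^+‖ ‖ΔA‖ − ln(1 − ‖C‖). -/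
open Matrix
open scoped ComplexOrder

open scoped Matrix.Norms.L2Operator MatrixOrder

lemma specNorm_eq_l2 {m n : ℕ} (A : Matrix (Fin m) (Fin n) ℂ) : specNorm A = ‖A‖ := rfl

lemma isUnit_gram {m n : ℕ} (B : Matrix (Fin m) (Fin n) ℂ) (h : B.rank = m) :
    IsUnit (B * Bᴴ) := by
  rw [← Matrix.mulVec_surjective_iff_isUnit]
  have h1 : (B * Bᴴ).rank = m := by rw [Matrix.rank_self_mul_conjTranspose, h]
  have h2 : LinearMap.range (B * Bᴴ).mulVecLin = ⊤ := by
    apply Submodule.eq_top_of_finrank_eq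
    rw [← Matrix.rank, h1]; simp
  exact LinearMap.range_eq_top.mp h2

lemma norm_le_one_of_orth {n k : ℕ} (Q : Matrix (Fin n) (Fin k) ℂ) (h : Qᴴ * Q = 1) :
    ‖Q‖ ≤ 1 := by
  have h1 := Matrix.l2_opNorm_conjTranspose_mul_self Q
  have h2 : ‖(1 : Matrix (Fin k) (Fin k) ℂ)‖ ≤ 1 :=
    (CStarAlgebra.norm_le_one_iff_of_nonneg _ zero_le_one).mpr le_rfl
  rw [h] at h1
  nlinarith [norm_nonneg Q]

lemma norm_one_sub_sqrt {k : ℕ} (S : Matrix (Fin k) (Fin k) ℂ) (hS : 0 ≤ S) :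
    ‖1 - S‖ ≤ ‖1 - S * S‖ := by
  have h1 : (1 : Matrix (Fin k) (Fin k) ℂ) ≤ 1 + S := by simpa using hS
  have hu : IsUnit (1 + S) := CStarAlgebra.isUnit_of_le 1 h1
  obtain ⟨u, hu⟩ := hu
  have h2 : (↑u⁻¹ : Matrix (Fin k) (Fin k) ℂ) ≤ 1 := 
    (CStarAlgebra.inv_le_one_iff_one_le (by rw [hu]; exact zero_le_one.trans h1)).mpr (by rw [← Units.val_le_val, hu]; exact h1)
  have h0 : 0 ≤ (↑u⁻¹ : Matrix (Fin k) (Fin k) ℂ) :=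
    CFC.inv_nonneg_of_nonneg u (by rw [hu]; exact zero_le_one.trans h1)
  have h3 := (CStarAlgebra.norm_le_one_iff_of_nonneg _ h0).mpr h2
  have h4 : 1 - S = (1 - S * S) * (↑u⁻¹ : Matrix (Fin k) (Fin k) ℂ) := by
    rw [Units.eq_mul_inv_iff_mul_eq, hu]; noncomm_ring
  calc ‖1 - S‖ = ‖(1 - S * S) * (↑u⁻¹ : Matrix (Fin k) (Fin k) ℂ)‖ := by rw [← h4]
    _ ≤ ‖1 - S * S‖ * ‖(↑u⁻¹ : Matrix (Fin k) (Fin k) ℂ)‖ := norm_mul_le _ _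
    _ ≤ ‖1 - S * S‖ * 1 := by gcongr
    _ = _ := mul_one _

lemma exists_null_basis {m n : ℕ} (B : Matrix (Fin m) (Fin n) ℂ) (h : B.rank = m) :
    ∃ Q : Matrix (Fin n) (Fin (n - m)) ℂ, Qᴴ * Q = 1 ∧ B * Q = 0 := by
  have hk : Module.finrank ℂ (LinearMap.ker (Matrix.toEuclideanLin B)) = n - m := by
    have h1 := LinearMap.finrank_range_add_finrank_ker (Matrix.toEuclideanLin B)
    have h2 : Module.finrank ℂ (LinearMap.range (Matrix.toEuclideanLin B)) = m := by
      refine Eq.trans ?_ h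
      rw [Matrix.toEuclideanLin_eq_toLin]
      exact (Matrix.rank_eq_finrank_range_toLin B _ _).symm
    rw [h2] at h1
    simp at h1
    omega
  let b := (stdOrthonormalBasis ℂ (LinearMap.ker (Matrix.toEuclideanLin B))).reindex (finCongr hk)
  refine ⟨Matrix.of fun i j => (b j : EuclideanSpace ℂ (Fin n)) i, ?_, ?_⟩
  · ext i j
    have h1 := orthonormal_iff_ite.mp b.orthonormal i j
    rw [Submodule.coe_inner, PiLp.inner_apply] at h1
    rw [Matrix.mul_apply, Matrix.one_apply, ← h1]
    refine Finset.sum_congr rfl fun x _ => ?_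
    simp [Matrix.conjTranspose_apply, mul_comm]
  · ext i j
    have h1 := LinearMap.mem_ker.mp (b j).2
    exact congrArg (fun v : EuclideanSpace ℂ (Fin m) => v i) h1

/-- Inequality (35) of Lemma 2: given a full-row-rank `A` with orthonormal null-space basis
`Ψ` and a full-row-rank perturbation `Ā = A + ΔA`, there is an orthonormal null-space basis
`Ψ̄` of `Ā` with `‖Ψ̄ − Ψ‖ ≤ ‖Ā⁺‖ ‖ΔA‖ − ln(1 − ‖C‖)` whenever `‖C‖ < 1`, where
`C = Ψᴴ ΔAᴴ (Ā Āᴴ)⁻¹ ΔA Ψ` and `Ā⁺ = Āᴴ (Ā Āᴴ)⁻¹`. -/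
theorem nullBasis_perturbation_bound (m n : ℕ) (hm : 0 < m) (hmn : m < n)
    (A Ab : Matrix (Fin m) (Fin n) ℂ)
    (hArank : A.rank = m) (hAbrank : Ab.rank = m)
    (Ψ : Matrix (Fin n) (Fin (n - m)) ℂ)
    (horth : Ψᴴ * Ψ = 1) (hnull : A * Ψ = 0) :
    ∃ Ψb : Matrix (Fin n) (Fin (n - m)) ℂ,
      Ψbᴴ * Ψb = 1 ∧ Ab * Ψb = 0 ∧
      (specNorm (Ψᴴ * (Ab - A)ᴴ * (Ab * Abᴴ)⁻¹ * (Ab - A) * Ψ) < 1 →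
        specNorm (Ψb - Ψ)
          ≤ specNorm (Abᴴ * (Ab * Abᴴ)⁻¹) * specNorm (Ab - A)
            - Real.log (1 - specNorm (Ψᴴ * (Ab - A)ᴴ * (Ab * Abᴴ)⁻¹ * (Ab - A) * Ψ))) := by
  by_cases hC : specNorm (Ψᴴ * (Ab - A)ᴴ * (Ab * Abᴴ)⁻¹ * (Ab - A) * Ψ) < 1
  swap
  · obtain ⟨Q, h1, h2⟩ := exists_null_basis Ab hAbrank
    exact ⟨Q, h1, h2, fun h => absurd h hC⟩
  have hW := isUnit_gram Ab hAbrank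
  have hdet := (Matrix.isUnit_iff_isUnit_det _).mp hW
  simp only [specNorm_eq_l2] at hC ⊢
  have hDΨ : (Ab - A) * Ψ = Ab * Ψ := by rw [Matrix.sub_mul, hnull, sub_zero]
  set D := Ab - A with hD
  set W := (Ab * Abᴴ)⁻¹ with hWdef
  have hWW : Ab * Abᴴ * W = 1 := Matrix.mul_nonsing_inv _ hdet
  set C := Ψᴴ * Dᴴ * W * D * Ψ with hCdef
  set Φ := Ψ - Abᴴ * W * D * Ψ with hΦ
  have hAΦ : Ab * Φ = 0 := by
    have : Ab * (Abᴴ * W * D * Ψ) = (Ab * Abᴴ * W) * (D * Ψ) := by simp only [Matrix.mul_assoc]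
    rw [hΦ, Matrix.mul_sub, this, hWW, Matrix.one_mul, hDΨ, sub_self]
  have hΦΦ : Φᴴ * Φ = 1 - C := by
    have e1 : Φᴴ = Ψᴴ - Ψᴴ * Dᴴ * Wᴴ * Ab := by
      simp [hΦ, Matrix.conjTranspose_mul, Matrix.mul_assoc]
    have e2 : Ψᴴ * Abᴴ = Ψᴴ * Dᴴ := by
      rw [← Matrix.conjTranspose_mul, ← Matrix.conjTranspose_mul, hDΨ]
    have e3 : Ψᴴ * (Abᴴ * W * D * Ψ) = C := by
      rw [hCdef, ← e2]; simp only [Matrix.mul_assoc]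
    rw [e1, Matrix.sub_mul, Matrix.mul_assoc _ Ab Φ, hAΦ, Matrix.mul_zero, sub_zero, hΦ,
      Matrix.mul_sub, horth, e3]
  have hpos : 0 ≤ 1 - C := by
    rw [← hΦΦ, Matrix.nonneg_iff_posSemidef]
    exact Matrix.posSemidef_conjTranspose_mul_self Φ
  set S := CFC.sqrt (1 - C) with hSdef
  have hS0 : 0 ≤ S := CFC.sqrt_nonneg _
  have hSS : S * S = 1 - C := CFC.sqrt_mul_sqrt_self _ hpos
  have hu : IsUnit (S * S) := by rw [hSS]; exact isUnit_one_sub_of_norm_lt_one hC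
  have hSd : IsUnit S.det := by
    rw [Matrix.isUnit_iff_isUnit_det, Matrix.det_mul] at hu
    exact isUnit_of_mul_isUnit_left hu
  have hSH : Sᴴ = S := (Matrix.nonneg_iff_posSemidef.mp hS0).isHermitian
  have hQ : (Φ * S⁻¹)ᴴ * (Φ * S⁻¹) = 1 := by
    rw [Matrix.conjTranspose_mul, Matrix.conjTranspose_nonsing_inv, hSH]
    calc S⁻¹ * Φᴴ * (Φ * S⁻¹) = S⁻¹ * (Φᴴ * Φ) * S⁻¹ := by simp only [Matrix.mul_assoc]
      _ = (S⁻¹ * S) * (S * S⁻¹) := by rw [hΦΦ, ← hSS]; simp only [Matrix.mul_assoc]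
      _ = 1 := by rw [Matrix.nonsing_inv_mul _ hSd, Matrix.mul_nonsing_inv _ hSd, Matrix.one_mul]
  refine ⟨Φ * S⁻¹, hQ, by rw [← Matrix.mul_assoc, hAΦ, Matrix.zero_mul], fun _ => ?_⟩
  have hsplit : Φ * S⁻¹ - Ψ = (Φ * S⁻¹) * (1 - S) - Abᴴ * W * D * Ψ := by
    rw [Matrix.mul_sub, Matrix.mul_assoc Φ S⁻¹ S, Matrix.nonsing_inv_mul _ hSd, Matrix.mul_one,
      Matrix.mul_one, hΦ]
    abel
  have b1 : ‖(Φ * S⁻¹) * (1 - S)‖ ≤ ‖C‖ := by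
    calc ‖(Φ * S⁻¹) * (1 - S)‖ ≤ ‖Φ * S⁻¹‖ * ‖1 - S‖ := Matrix.l2_opNorm_mul _ _
      _ ≤ 1 * ‖1 - S * S‖ := by
        gcongr
        · exact norm_le_one_of_orth _ hQ
        · exact norm_one_sub_sqrt S hS0
      _ = ‖C‖ := by rw [hSS, one_mul, sub_sub_cancel]
  have b2 : ‖Abᴴ * W * D * Ψ‖ ≤ ‖Abᴴ * W‖ * ‖D‖ := by
    calc ‖Abᴴ * W * D * Ψ‖ ≤ ‖Abᴴ * W * D‖ * ‖Ψ‖ := Matrix.l2_opNorm_mul _ _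
      _ ≤ (‖Abᴴ * W‖ * ‖D‖) * 1 := by
        gcongr
        · exact Matrix.l2_opNorm_mul _ _
        · exact norm_le_one_of_orth _ horth
      _ = _ := mul_one _
  have b3 : Real.log (1 - ‖C‖) ≤ (1 - ‖C‖) - 1 := Real.log_le_sub_one_of_pos (by linarith)
  rw [hsplit]
  have b4 := norm_sub_le ((Φ * S⁻¹) * (1 - S)) (Abᴴ * W * D * Ψ)
  linarith
end

section
/- Let m < n be positive integers, let A, Ā ∈ ℂ^{m×n} with Ā of full row rank, and set ΔA = Ā − A. Let Ψ, Ψ̄ ∈ ℂ^{n×(n−m)} be matrices with orthonormal columns satisfying AΨ = 0 and ĀΨ̄ = 0, and set ΔΨ = Ψ̄ − Ψ. Then ΔΨ = − Ā^H(ĀĀ^H)^{-1} ΔA Ψ − Ψ̄ (ΔΨ)^H Ψ. -/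
open Matrix
open scoped ComplexOrder

/-- The exact perturbation identity (38) of the paper: with `ΔA = Ā − A`, `A Ψ = 0`,
`Ā Ψ̄ = 0`, orthonormal columns, and `Ā` of full row rank,
`ΔΨ = − Āᴴ(Ā Āᴴ)⁻¹ ΔA Ψ − Ψ̄ (ΔΨ)ᴴ Ψ`, where `ΔΨ = Ψ̄ − Ψ`. -/
theorem nullBasis_perturbation_identity (m n : ℕ) (hm : 0 < m) (hmn : m < n)
    (A Ab : Matrix (Fin m) (Fin n) ℂ) (hAbrank : Ab.rank = m)
    (Ψ Ψb : Matrix (Fin n) (Fin (n - m)) ℂ)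
    (horth : Ψᴴ * Ψ = 1) (horthb : Ψbᴴ * Ψb = 1)
    (hnull : A * Ψ = 0) (hnullb : Ab * Ψb = 0) :
    Ψb - Ψ = -(Abᴴ * (Ab * Abᴴ)⁻¹ * (Ab - A) * Ψ) - Ψb * (Ψb - Ψ)ᴴ * Ψ := by
  have hr : (Ab * Abᴴ).rank = Fintype.card (Fin m) := by
    rw [Matrix.rank_self_mul_conjTranspose, hAbrank, Fintype.card_fin]
  have hu : IsUnit (Ab * Abᴴ) := by
    rw [← Matrix.mulVec_surjective_iff_isUnit]
    have h : LinearMap.range (Ab * Abᴴ).mulVecLin = ⊤ := by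
      apply Submodule.eq_top_of_finrank_eq
      rw [Module.finrank_fintype_fun_eq_card]
      exact hr
    exact LinearMap.range_eq_top.mp h
  have hinv : Ab * Abᴴ * (Ab * Abᴴ)⁻¹ = 1 :=
    Matrix.mul_nonsing_inv _ ((Matrix.isUnit_iff_isUnit_det _).mp hu)
  have h0 : Ψbᴴ * Abᴴ = 0 := by
    rw [← Matrix.conjTranspose_mul, hnullb, Matrix.conjTranspose_zero]
  have hVU : Matrix.fromRows Ab Ψbᴴ * Matrix.fromCols (Abᴴ * (Ab * Abᴴ)⁻¹) Ψb = 1 := by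
    rw [Matrix.fromRows_mul_fromCols, ← Matrix.mul_assoc, hinv, hnullb, horthb,
      ← Matrix.mul_assoc, h0, Matrix.zero_mul, Matrix.fromBlocks_one]
  have hUV := (Matrix.mul_eq_one_comm_of_card_eq _ _ _ (by simp; omega)).mp hVU
  rw [Matrix.fromCols_mul_fromRows] at hUV
  have key : Abᴴ * (Ab * Abᴴ)⁻¹ * Ab * Ψ + Ψb * Ψbᴴ * Ψ = Ψ := by
    rw [← Matrix.add_mul, hUV, Matrix.one_mul]
  have e1 : Abᴴ * (Ab * Abᴴ)⁻¹ * (Ab - A) * Ψ = Abᴴ * (Ab * Abᴴ)⁻¹ * Ab * Ψ := by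
    rw [Matrix.mul_assoc, Matrix.sub_mul, hnull, sub_zero, ← Matrix.mul_assoc]
  have e2 : Ψb * (Ψb - Ψ)ᴴ * Ψ = Ψb * Ψbᴴ * Ψ - Ψb := by
    rw [Matrix.conjTranspose_sub, Matrix.mul_sub, Matrix.sub_mul, Matrix.mul_assoc Ψb Ψᴴ, horth,
      Matrix.mul_one]
  rw [e1, e2]
  nth_rewrite 1 [← key]
  abel
end

section
/- Let m < n be positive integers, let A, Ā ∈ ℂ^{m×n} with Ā of full row rank, and set ΔA = Ā − A. Let Ψ, Ψ̄ ∈ ℂ^{n×(n−m)} be matrices with orthonormal columns satisfying AΨ = 0 and ĀΨ̄ = 0, and set ΔΨ = Ψ̄ − Ψ. Then (ΔΨ)^H Ψ + Ψ^H ΔΨ + Ψ^H ΔΨ (ΔΨ)^H Ψ = − Ψ^H (ΔA)^H (ĀĀ^H)^{-1} ΔA Ψ. -/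
open Matrix
open scoped ComplexOrder

/-- The exact second-order identity (39) of the paper: with `ΔA = Ā − A`, `A Ψ = 0`,
`Ā Ψ̄ = 0`, orthonormal columns, and `Ā` of full row rank,
`(ΔΨ)ᴴ Ψ + Ψᴴ ΔΨ + Ψᴴ ΔΨ (ΔΨ)ᴴ Ψ = − Ψᴴ (ΔA)ᴴ (Ā Āᴴ)⁻¹ ΔA Ψ`, where `ΔΨ = Ψ̄ − Ψ`. -/
theorem nullBasis_second_order_identity (m n : ℕ) (hm : 0 < m) (hmn : m < n)
    (A Ab : Matrix (Fin m) (Fin n) ℂ) (hAbrank : Ab.rank = m)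
    (Ψ Ψb : Matrix (Fin n) (Fin (n - m)) ℂ)
    (horth : Ψᴴ * Ψ = 1) (horthb : Ψbᴴ * Ψb = 1)
    (hnull : A * Ψ = 0) (hnullb : Ab * Ψb = 0) :
    (Ψb - Ψ)ᴴ * Ψ + Ψᴴ * (Ψb - Ψ) + Ψᴴ * (Ψb - Ψ) * (Ψb - Ψ)ᴴ * Ψ
      = -(Ψᴴ * (Ab - A)ᴴ * (Ab * Abᴴ)⁻¹ * (Ab - A) * Ψ) := by
  have hunit : IsUnit (Ab * Abᴴ).det := by
    rw [← Matrix.isUnit_iff_isUnit_det, ← Matrix.mulVec_surjective_iff_isUnit]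
    have h1 : (Ab * Abᴴ).rank = m := by rw [Matrix.rank_self_mul_conjTranspose, hAbrank]
    have h2 : LinearMap.range (Ab * Abᴴ).mulVecLin = ⊤ := by
      apply Submodule.eq_top_of_finrank_eq
      rw [Module.finrank_fin_fun]
      exact h1
    exact LinearMap.range_eq_top.mp h2
  have hnb' : Ψbᴴ * Abᴴ = 0 := by
    rw [← Matrix.conjTranspose_mul, hnullb, Matrix.conjTranspose_zero]
  have hone : Matrix.fromRows Ab Ψbᴴ * Matrix.fromCols (Abᴴ * (Ab * Abᴴ)⁻¹) Ψb = 1 := by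
    rw [Matrix.fromRows_mul_fromCols, ← Matrix.mul_assoc, ← Matrix.mul_assoc, hnb',
      Matrix.mul_nonsing_inv _ hunit, horthb, hnullb, Matrix.zero_mul, Matrix.fromBlocks_one]
  have e : Fin n ≃ Fin m ⊕ Fin (n - m) :=
    Fintype.equivOfCardEq (by simp; omega)
  have hproj : Abᴴ * (Ab * Abᴴ)⁻¹ * Ab + Ψb * Ψbᴴ = 1 := by
    rw [← Matrix.fromCols_mul_fromRows]
    exact (Matrix.fromCols_mul_fromRows_eq_one_comm e _ _ _ _).mpr hone
  have hd : (Ab - A) * Ψ = Ab * Ψ := by rw [Matrix.sub_mul, hnull, sub_zero]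
  have hd' : Ψᴴ * (Ab - A)ᴴ = Ψᴴ * Abᴴ := by
    rw [← Matrix.conjTranspose_mul, hd, Matrix.conjTranspose_mul]
  have hR : Ψᴴ * (Ab - A)ᴴ * (Ab * Abᴴ)⁻¹ * (Ab - A) * Ψ
      = 1 - Ψᴴ * Ψb * (Ψbᴴ * Ψ) := by
    rw [Matrix.mul_assoc _ (Ab - A), hd, hd']
    have : Ψᴴ * Abᴴ * (Ab * Abᴴ)⁻¹ * (Ab * Ψ)
        = Ψᴴ * (Abᴴ * (Ab * Abᴴ)⁻¹ * Ab) * Ψ := by simp only [Matrix.mul_assoc]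
    rw [this, eq_sub_of_add_eq hproj, Matrix.mul_sub, Matrix.sub_mul, Matrix.mul_one, horth]
    simp only [Matrix.mul_assoc]
  rw [hR, Matrix.mul_assoc _ (Ψb - Ψ)ᴴ, Matrix.conjTranspose_sub, Matrix.sub_mul, Matrix.mul_sub,
    horth, Matrix.mul_sub, Matrix.sub_mul, Matrix.mul_one, Matrix.one_mul]
  abel
end

section
/- Let K ≥ 1 and let M_1,…,M_K, N be positive integers with Σ_{j=1}^{K} M_j ≤ N. For j = 1,…,K let H_j ∈ ℂ^{M_j×N}, and assume the stacked matrix H = [H_1; …; H_K] ∈ ℂ^{(ΣM_j)×N} has full row rank. Fix k ∈ {1,…,K}, set d_k = N − Σ_{j≠k} M_j, and let Ψ_k ∈ ℂ^{N×d_k} be a matrix with orthonormal columns satisfying H_j Ψ_k = 0 for all j ≠ k. Then (a) the matrix H_k Ψ_k ∈ ℂ^{M_k×d_k} has full row rank, and (b) the block of columns of H^H (H H^H)^{-1} corresponding to the k-th row block of H equals Ψ_k (H_k Ψ_k)^H ( H_k Ψ_k (H_k Ψ_k)^H )^{-1}. -/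
open Matrix
open scoped ComplexOrder

/-- The stacked multi-user channel matrix `H = [H_1; …; H_K]`, with rows indexed by the
sigma type `(j : Fin K) × Fin (M j)`. -/
def stackAll (K N : ℕ) (M : Fin K → ℕ)
    (H : (j : Fin K) → Matrix (Fin (M j)) (Fin N) ℂ) :
    Matrix ((j : Fin K) × Fin (M j)) (Fin N) ℂ :=
  Matrix.of fun p c => H p.1 p.2 c

/-- The zero-forcing / block-diagonalization identity proved via the Schur complement in
Appendix A of the paper: if the stacked channel `H` has full row rank and `Ψ_k` is an
orthonormal basis of the common null space of all `H_j`, `j ≠ k`, then (a) `H_k Ψ_k` has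
full row rank, and (b) the `k`-th column block of `Hᴴ(H Hᴴ)⁻¹` equals
`Ψ_k (H_k Ψ_k)ᴴ (H_k Ψ_k (H_k Ψ_k)ᴴ)⁻¹`. -/
theorem zf_precoder_identity (K N : ℕ) (hK : 1 ≤ K) (hN : 0 < N)
    (M : Fin K → ℕ) (hM : ∀ j, 0 < M j) (hsum : ∑ j, M j ≤ N)
    (H : (j : Fin K) → Matrix (Fin (M j)) (Fin N) ℂ)
    (hrank : (stackAll K N M H).rank = ∑ j, M j)
    (k : Fin K)
    (Ψ : Matrix (Fin N) (Fin (N - ∑ j ∈ Finset.univ.erase k, M j)) ℂ)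
    (horth : Ψᴴ * Ψ = 1)
    (hnull : ∀ j, j ≠ k → H j * Ψ = 0) :
    (H k * Ψ).rank = M k ∧
    ∀ (i : Fin N) (c : Fin (M k)),
      ((stackAll K N M H)ᴴ * (stackAll K N M H * (stackAll K N M H)ᴴ)⁻¹) i ⟨k, c⟩
        = (Ψ * (H k * Ψ)ᴴ * (H k * Ψ * (H k * Ψ)ᴴ)⁻¹) i c := by
  classical
  set S := stackAll K N M H with hS
  have hcard : Fintype.card ((j : Fin K) × Fin (M j)) = ∑ j, M j := by simp
  have hLI : LinearIndependent ℂ S.row := by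
    rw [linearIndependent_iff_card_eq_finrank_span, hcard, ← hrank, Matrix.rank_eq_finrank_span_row]
    rfl
  -- invertibility of the Gram matrix
  have hunit : IsUnit (S * Sᴴ) := by
    rw [← Matrix.linearIndependent_rows_iff_isUnit, linearIndependent_iff_card_eq_finrank_span,
      hcard, ← hrank, ← Matrix.rank_self_mul_conjTranspose, Matrix.rank_eq_finrank_span_row]
    rfl
  have hdet : IsUnit (S * Sᴴ).det := (Matrix.isUnit_iff_isUnit_det _).mp hunit
  set W := (S * Sᴴ)⁻¹ with hW
  have hSP : S * (Sᴴ * W) = 1 := by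
    rw [← Matrix.mul_assoc, hW, Matrix.mul_nonsing_inv _ hdet]
  set P : Matrix (Fin N) (Fin (M k)) ℂ := (Sᴴ * W).submatrix id (fun c => ⟨k, c⟩) with hP
  have hHP : ∀ (j : Fin K) (a : Fin (M j)) (c : Fin (M k)),
      (H j * P) a c = (1 : Matrix ((j : Fin K) × Fin (M j)) ((j : Fin K) × Fin (M j)) ℂ) ⟨j, a⟩ ⟨k, c⟩ := by
    intro j a c
    rw [← hSP]
    rfl
  have hHk : H k * P = 1 := by
    ext a c
    rw [hHP]
    simp [Matrix.one_apply]
  have hHj : ∀ j, j ≠ k → H j * P = 0 := by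
    intro j hj
    ext a c
    rw [hHP, Matrix.one_apply_ne]
    · rfl
    · intro h
      exact hj (congrArg Sigma.fst h)
  -- the null space of the other users
  let A : Matrix {p : (j : Fin K) × Fin (M j) // p.1 ≠ k} (Fin N) ℂ := fun p c => S p.1 c
  have hALI : LinearIndependent ℂ A.row := hLI.comp _ Subtype.val_injective
  have hcardA : Fintype.card {p : (j : Fin K) × Fin (M j) // p.1 ≠ k}
      = ∑ j ∈ Finset.univ.erase k, M j := by
    rw [Fintype.card_subtype]
    have : (Finset.univ.filter fun p : (j : Fin K) × Fin (M j) => p.1 ≠ k)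
        = (Finset.univ.erase k).sigma (fun j => Finset.univ) := by
      ext p; simp
    rw [this, Finset.card_sigma]
    simp
  have hArank : A.rank = ∑ j ∈ Finset.univ.erase k, M j := by
    rw [hALI.rank_matrix, hcardA]
  have hker : Module.finrank ℂ (LinearMap.ker A.mulVecLin)
      = N - ∑ j ∈ Finset.univ.erase k, M j := by
    have h1 := LinearMap.finrank_range_add_finrank_ker A.mulVecLin
    have h2 : Module.finrank ℂ (LinearMap.range A.mulVecLin) = A.rank := rfl
    rw [h2, hArank] at h1
    simp only [Module.finrank_fin_fun] at h1
    omega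
  have hrange : Module.finrank ℂ (LinearMap.range Ψ.mulVecLin)
      = N - ∑ j ∈ Finset.univ.erase k, M j := by
    have h2 : Module.finrank ℂ (LinearMap.range Ψ.mulVecLin) = Ψ.rank := rfl
    rw [h2, ← Matrix.rank_conjTranspose_mul_self, horth, Matrix.rank_one, Fintype.card_fin]
  have hle : LinearMap.range Ψ.mulVecLin ≤ LinearMap.ker A.mulVecLin := by
    rintro _ ⟨x, rfl⟩
    rw [LinearMap.mem_ker]
    ext ⟨⟨j, a⟩, hj⟩
    have h := congrFun (congrArg (fun B => B *ᵥ x) (hnull j hj)) a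
    simp only [← Matrix.mulVec_mulVec, Matrix.zero_mulVec] at h
    exact h
  have heq := Submodule.eq_of_le_of_finrank_eq hle (hrange.trans hker.symm)
  have hproj : Ψ * (Ψᴴ * P) = P := by
    ext i c
    have hmem : P.col c ∈ LinearMap.range Ψ.mulVecLin := by
      rw [heq, LinearMap.mem_ker]
      ext ⟨⟨j, a⟩, hj⟩
      exact congrFun (congrFun (hHj j hj) a) c
    obtain ⟨x, hx⟩ := hmem
    rw [Matrix.mulVecLin_apply] at hx
    have h : Ψ *ᵥ (Ψᴴ *ᵥ (P.col c)) = P.col c := by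
      rw [← hx, Matrix.mulVec_mulVec x, horth, Matrix.one_mulVec]
    exact congrFun h i
  -- the coordinates
  set G := H k * Ψ with hG
  have hX : Ψᴴ * P = Gᴴ * W.submatrix (fun c => (⟨k, c⟩ : (j : Fin K) × Fin (M j)))
      (fun c => ⟨k, c⟩) := by
    have h1 : Ψᴴ * P = ((S * Ψ)ᴴ * W).submatrix id (fun c => ⟨k, c⟩) := by
      rw [Matrix.conjTranspose_mul, Matrix.mul_assoc]
      rfl
    rw [h1]
    ext b c
    simp only [Matrix.submatrix_apply, id, Matrix.mul_apply (M := (S * Ψ)ᴴ),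
      Matrix.mul_apply (M := Gᴴ), Fintype.sum_sigma]
    rw [Finset.sum_eq_single k]
    · rfl
    · intro j _ hj
      refine Finset.sum_eq_zero fun a _ => ?_
      have h : (S * Ψ) ⟨j, a⟩ b = 0 := congrFun (congrFun (hnull j hj) a) b
      rw [Matrix.conjTranspose_apply, h]
      simp
    · simp
  set B := W.submatrix (fun c => (⟨k, c⟩ : (j : Fin K) × Fin (M j))) (fun c => ⟨k, c⟩) with hB
  have hGX : (G * Gᴴ) * B = 1 := by
    rw [Matrix.mul_assoc, ← hX, hG, Matrix.mul_assoc, hproj, hHk]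
  have hBinv : (G * Gᴴ)⁻¹ = B := Matrix.inv_eq_right_inv hGX
  refine ⟨?_, ?_⟩
  · rw [← Matrix.rank_self_mul_conjTranspose,
      Matrix.rank_of_isUnit _ (IsUnit.of_mul_eq_one _ hGX), Fintype.card_fin]
  · intro i c
    rw [hBinv, Matrix.mul_assoc, ← hX, hproj]
    rfl
end

section
/- Consider the downlink MU-MIMO setting: positive integers N, K, M_1,…,M_K with N ≥ Σ_k M_k; matrices H_k ∈ ℂ^{M_k×N} (k = 1,…,K) such that the stacked matrix H = [H_1; …; H_K] has full row rank; reals L_k > 0, σ² > 0, P_T > 0; nonnegative weights η_k, η_{c,k} (k = 1,…,K); M = min_k M_k; N_k = N − Σ_{k'<k} M_{k'}. SNS bases: Ψ_1 = I_N and, for k ≥ 2, Ψ_k ∈ ℂ^{N×N_k} has orthonormal columns and satisfies H_j Ψ_k = 0 for all j < k. Define the SNS optimal weighted sum rate R⋆ as the supremum, over all tuples (Q_c, X_1,…,X_K) of Hermitian positive semi-definite matrices with Q_c ∈ ℂ^{N×N}, rank(Q_c) ≤ M, X_k ∈ ℂ^{N_k×N_k}, rank(X_k) ≤ M_k, and tr(Q_c)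 + Σ_k tr(X_k) ≤ P_T, of the quantity Σ_k η_k η_{c,k} R_c + Σ_k η_k R_k, where R_k = log₂det( I + (1/L_k) H_k Ψ_k X_k Ψ_k^H H_k^H [σ² I + (1/L_k) H_k (Σ_{k'<k} Ψ_{k'} X_{k'} Ψ_{k'}^H) H_k^H]^{-1} ), R_{k,c} = log₂det( I + (1/L_k) H_k Q_c H_k^H [σ² I + (1/L_k) H_k (Σ_{k'≤k} Ψ_{k'} X_{k'} Ψ_{k'}^H) H_k^H]^{-1} ), and R_c = min_k R_{k,c}. Define the zero-forcing optimal weighted sum rate R^{ZF⋆} as the supremum, over all nonnegative reals p_{k,l} (k = 1,…,K, l = 1,…,M_k) such that the precoder P = H^H(HH^H)^{-1} · blkdiag(D_1^{1/2},…,D_K^{1/2}) with D_k = diag(p_{k,1},…,p_{k,M_k}) satisfies tr(P P^H) ≤ P_T, of the quantity Σ_k η_k Σ_{l=1}^{M_k} log₂(1 + p_{k,l}/(L_k σ²)). Then R⋆ ≥ R^{ZF⋆}. -/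
open Matrix
open scoped ComplexOrder

/-- The SNS null-space dimension `N_k = N − Σ_{k'<k} M_{k'}`. -/
def snsDim (N : ℕ) (M : ℕ → ℕ) (k : ℕ) : ℕ := N - ∑ j ∈ Finset.Icc 1 (k - 1), M j

/-- The SNS private rate `R_k` of user `k`. -/
noncomputable def snsPrivateRate (N : ℕ) (M : ℕ → ℕ)
    (H : (k : ℕ) → Matrix (Fin (M k)) (Fin N) ℂ)
    (Ψ : (k : ℕ) → Matrix (Fin N) (Fin (snsDim N M k)) ℂ)
    (L : ℕ → ℝ) (s : ℝ)
    (X : (k : ℕ) → Matrix (Fin (snsDim N M k)) (Fin (snsDim N M k)) ℂ)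
    (k : ℕ) : ℝ :=
  Real.logb 2
    ((1 + ((1 / L k) • (H k * (Ψ k * X k * (Ψ k)ᴴ) * (H k)ᴴ)) *
        (s • (1 : Matrix (Fin (M k)) (Fin (M k)) ℂ) +
          (1 / L k) •
            (H k * (∑ j ∈ Finset.Icc 1 (k - 1), Ψ j * X j * (Ψ j)ᴴ) * (H k)ᴴ))⁻¹).det.re)

/-- The SNS common-message rate `R_{k,c}` of user `k`. -/
noncomputable def snsCommonRate (N : ℕ) (M : ℕ → ℕ)
    (H : (k : ℕ) → Matrix (Fin (M k)) (Fin N) ℂ)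
    (Ψ : (k : ℕ) → Matrix (Fin N) (Fin (snsDim N M k)) ℂ)
    (L : ℕ → ℝ) (s : ℝ) (Qc : Matrix (Fin N) (Fin N) ℂ)
    (X : (k : ℕ) → Matrix (Fin (snsDim N M k)) (Fin (snsDim N M k)) ℂ)
    (k : ℕ) : ℝ :=
  Real.logb 2
    ((1 + ((1 / L k) • (H k * Qc * (H k)ᴴ)) *
        (s • (1 : Matrix (Fin (M k)) (Fin (M k)) ℂ) +
          (1 / L k) •
            (H k * (∑ j ∈ Finset.Icc 1 k, Ψ j * X j * (Ψ j)ᴴ) * (H k)ᴴ))⁻¹).det.re)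

/-- The SNS weighted sum rate `Σ_k η_k η_{c,k} R_c + Σ_k η_k R_k` with `R_c = min_k R_{k,c}`. -/
noncomputable def snsWSR (K N : ℕ) (hK : 1 ≤ K) (M : ℕ → ℕ)
    (H : (k : ℕ) → Matrix (Fin (M k)) (Fin N) ℂ)
    (Ψ : (k : ℕ) → Matrix (Fin N) (Fin (snsDim N M k)) ℂ)
    (L : ℕ → ℝ) (s : ℝ) (η ηc : ℕ → ℝ) (Qc : Matrix (Fin N) (Fin N) ℂ)
    (X : (k : ℕ) → Matrix (Fin (snsDim N M k)) (Fin (snsDim N M k)) ℂ) : ℝ :=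
  (∑ k ∈ Finset.Icc 1 K, η k * ηc k *
      ((Finset.Icc 1 K).inf' (Finset.nonempty_Icc.mpr hK)
        (snsCommonRate N M H Ψ L s Qc X))) +
  ∑ k ∈ Finset.Icc 1 K, η k * snsPrivateRate N M H Ψ L s X k

/-- The SNS optimal weighted sum rate `R⋆` (problem (17) of the paper). -/
noncomputable def snsOptWSR (K N : ℕ) (hK : 1 ≤ K) (M : ℕ → ℕ)
    (H : (k : ℕ) → Matrix (Fin (M k)) (Fin N) ℂ)
    (Ψ : (k : ℕ) → Matrix (Fin N) (Fin (snsDim N M k)) ℂ)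
    (L : ℕ → ℝ) (s : ℝ) (η ηc : ℕ → ℝ) (PT : ℝ) : ℝ :=
  sSup {r : ℝ | ∃ (Qc : Matrix (Fin N) (Fin N) ℂ)
      (X : (k : ℕ) → Matrix (Fin (snsDim N M k)) (Fin (snsDim N M k)) ℂ),
    Qc.PosSemidef ∧
    Qc.rank ≤ (Finset.Icc 1 K).inf' (Finset.nonempty_Icc.mpr hK) M ∧
    (∀ k ∈ Finset.Icc 1 K, (X k).PosSemidef ∧ (X k).rank ≤ M k) ∧
    Qc.trace.re + ∑ k ∈ Finset.Icc 1 K, (X k).trace.re ≤ PT ∧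
    r = snsWSR K N hK M H Ψ L s η ηc Qc X}

/-- The zero-forcing precoder `P = Hᴴ(H Hᴴ)⁻¹ · blkdiag(D_1^{1/2},…,D_K^{1/2})` with
`D_k = diag(p_{k,1},…,p_{k,M_k})`. -/
noncomputable def zfPrecoder (K N : ℕ) (M : ℕ → ℕ)
    (H : (k : ℕ) → Matrix (Fin (M k)) (Fin N) ℂ) (p : ℕ → ℕ → ℝ) :
    Matrix (Fin N) ((j : Fin (K + 1 - 1)) × Fin (M (j.val + 1))) ℂ :=
  (stackMat N M H (K + 1))ᴴ *
    (stackMat N M H (K + 1) * (stackMat N M H (K + 1))ᴴ)⁻¹ *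
    Matrix.diagonal (fun pr : (j : Fin (K + 1 - 1)) × Fin (M (j.val + 1)) =>
      (Real.sqrt (p (pr.1.val + 1) pr.2.val) : ℂ))

/-- The zero-forcing optimal weighted sum rate `R^{ZF⋆}`. -/
noncomputable def zfOptWSR (K N : ℕ) (M : ℕ → ℕ)
    (H : (k : ℕ) → Matrix (Fin (M k)) (Fin N) ℂ)
    (L : ℕ → ℝ) (s : ℝ) (η : ℕ → ℝ) (PT : ℝ) : ℝ :=
  sSup {r : ℝ | ∃ p : ℕ → ℕ → ℝ,
    (∀ k ∈ Finset.Icc 1 K, ∀ l < M k, 0 ≤ p k l) ∧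
    (zfPrecoder K N M H p * (zfPrecoder K N M H p)ᴴ).trace.re ≤ PT ∧
    r = ∑ k ∈ Finset.Icc 1 K, η k *
          ∑ l ∈ Finset.range (M k), Real.logb 2 (1 + p k l / (L k * s))}


lemma aux_psd_entry {n : ℕ} (X : Matrix (Fin n) (Fin n) ℂ) (hX : X.PosSemidef) (T : ℝ)
    (hT : X.trace.re ≤ T) (i j : Fin n) : ‖X i j‖ ≤ T := by
  obtain ⟨C, rfl⟩ : ∃ C : Matrix (Fin n) (Fin n) ℂ, X = Cᴴ * C := by
    open scoped MatrixOrder in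
    obtain ⟨B, hB⟩ := CStarAlgebra.nonneg_iff_eq_star_mul_self.mp hX.nonneg
    exact ⟨B, hB⟩
  have htr : (Cᴴ * C).trace.re = ∑ a, ∑ l, ‖C l a‖ ^ 2 := by
    simp only [Matrix.trace, Matrix.diag, Matrix.mul_apply, Complex.re_sum, conjTranspose_apply]
    refine Finset.sum_congr rfl fun a _ => Finset.sum_congr rfl fun l _ => ?_
    rw [← Complex.normSq_eq_norm_sq, Complex.star_def, ← Complex.normSq_eq_conj_mul_self]
    simp
  have hcol : ∀ a, ∑ l, ‖C l a‖ ^ 2 ≤ T := fun a =>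
    le_trans (Finset.single_le_sum (f := fun a => ∑ l, ‖C l a‖ ^ 2)
      (fun _ _ => Finset.sum_nonneg fun _ _ => by positivity) (Finset.mem_univ a)) (htr ▸ hT)
  rw [Matrix.mul_apply]
  calc _ ≤ ∑ l, ‖Cᴴ i l * C l j‖ := norm_sum_le _ _
    _ ≤ ∑ l, (‖C l i‖ ^ 2 / 2 + ‖C l j‖ ^ 2 / 2) := by
        refine Finset.sum_le_sum fun l _ => ?_
        rw [norm_mul, conjTranspose_apply, norm_star]
        nlinarith [sq_nonneg (‖C l i‖ - ‖C l j‖)]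
    _ ≤ T := by
        rw [Finset.sum_add_distrib, ← Finset.sum_div, ← Finset.sum_div]
        linarith [hcol i, hcol j]

lemma aux_conj_entry {m n : ℕ} (F : Matrix (Fin m) (Fin n) ℂ) (T : ℝ) :
    ∃ c : ℝ, ∀ X : Matrix (Fin n) (Fin n) ℂ, X.PosSemidef → X.trace.re ≤ T →
      ∀ i j, ‖(F * X * Fᴴ) i j‖ ≤ c := by
  refine ⟨∑ i, ∑ j, ∑ b, (∑ a, ‖F i a‖ * |T|) * ‖F j b‖, fun X hX hT i j => ?_⟩
  have h1 : ‖(F * X * Fᴴ) i j‖ ≤ ∑ b, (∑ a, ‖F i a‖ * |T|) * ‖F j b‖ := by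
    rw [Matrix.mul_apply]
    refine (norm_sum_le _ _).trans (Finset.sum_le_sum fun b _ => ?_)
    rw [norm_mul, conjTranspose_apply, norm_star]
    refine mul_le_mul_of_nonneg_right ?_ (norm_nonneg _)
    rw [Matrix.mul_apply]
    refine (norm_sum_le _ _).trans (Finset.sum_le_sum fun a _ => ?_)
    rw [norm_mul]
    exact mul_le_mul_of_nonneg_left ((aux_psd_entry X hX T hT a b).trans (le_abs_self T))
      (norm_nonneg _)
  refine h1.trans ?_
  refine le_trans (Finset.single_le_sum (f := fun j => ∑ b, (∑ a, ‖F i a‖ * |T|) * ‖F j b‖)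
    (fun _ _ => by positivity) (Finset.mem_univ j)) ?_
  exact Finset.single_le_sum (f := fun i => ∑ j, ∑ b, (∑ a, ‖F i a‖ * |T|) * ‖F j b‖)
    (fun _ _ => by positivity) (Finset.mem_univ i)

lemma aux_inv_entry {m : ℕ} (s : ℝ) (hs : 0 < s) (B : Matrix (Fin m) (Fin m) ℂ)
    (hB : B.PosSemidef) (i j : Fin m) :
    ‖(s • (1 : Matrix (Fin m) (Fin m) ℂ) + B)⁻¹ i j‖ ≤ 1 / s := by
  have hpd : (s • (1 : Matrix (Fin m) (Fin m) ℂ) + B).PosDef :=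
    (Matrix.PosDef.one.smul hs).add_posSemidef hB
  set G := (s • (1 : Matrix (Fin m) (Fin m) ℂ) + B)⁻¹ with hG
  have hGh : Gᴴ = G := hpd.inv.isHermitian
  have hu : G * (s • (1 : Matrix (Fin m) (Fin m) ℂ) + B) = 1 :=
    Matrix.nonsing_inv_mul _ ((Matrix.isUnit_iff_isUnit_det _).1 hpd.isUnit)
  have hGe : G = s • (G * Gᴴ) + G * B * Gᴴ := by
    calc G = G * (s • (1 : Matrix (Fin m) (Fin m) ℂ) + B) * Gᴴ := by rw [hu, one_mul, hGh]
      _ = _ := by rw [mul_add, add_mul]; simp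
  have hP : 0 ≤ (G * B * Gᴴ) i i := (hB.mul_mul_conjTranspose_same G).diag_nonneg
  have hsum : ((G * Gᴴ) i i).re = ∑ l, ‖G i l‖ ^ 2 := by
    rw [Matrix.mul_apply, Complex.re_sum]
    refine Finset.sum_congr rfl fun l _ => ?_
    rw [conjTranspose_apply, ← Complex.normSq_eq_norm_sq, Complex.star_def, Complex.mul_conj]
    simp
  have h1 : (G i i).re = s * (∑ l, ‖G i l‖ ^ 2) + ((G * B * Gᴴ) i i).re := by
    conv_lhs => rw [hGe]
    simp [hsum]
  have hP' : 0 ≤ ((G * B * Gᴴ) i i).re := (Complex.le_def.1 hP).1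
  have hs1 : ∀ l, ‖G i l‖ ^ 2 ≤ ∑ l, ‖G i l‖ ^ 2 := fun l =>
    Finset.single_le_sum (f := fun l => ‖G i l‖ ^ 2) (fun _ _ => by positivity) (Finset.mem_univ l)
  have h2 : (G i i).re ≤ ‖G i i‖ := Complex.re_le_norm _
  have h3 : s * ‖G i i‖ ≤ 1 := by
    by_contra! h
    have : 0 < ‖G i i‖ := by
      rcases (norm_nonneg (G i i)).eq_or_lt with h0 | h0
      · rw [← h0] at h; simp at h; linarith
      · exact h0
    nlinarith [mul_le_mul_of_nonneg_left (hs1 i) hs.le]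
  have h4 : s * ‖G i j‖ ^ 2 ≤ ‖G i i‖ := by
    nlinarith [mul_le_mul_of_nonneg_left (hs1 j) hs.le]
  have h5 : (s * ‖G i j‖) ^ 2 ≤ 1 := by nlinarith
  rw [le_div_iff₀ hs, mul_comm]
  nlinarith [mul_nonneg hs.le (norm_nonneg (G i j))]

lemma aux_rate_bound {m n : ℕ} (F : Matrix (Fin m) (Fin n) ℂ) (T c s : ℝ) (hs : 0 < s) :
    ∃ R : ℝ, ∀ X : Matrix (Fin n) (Fin n) ℂ, X.PosSemidef → X.trace.re ≤ T →
      ∀ B : Matrix (Fin m) (Fin m) ℂ, B.PosSemidef →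
      Real.logb 2 ((1 + (c • (F * X * Fᴴ)) * (s • (1 : Matrix (Fin m) (Fin m) ℂ) + B)⁻¹).det.re)
        ≤ R := by
  obtain ⟨a, ha⟩ := aux_conj_entry F T
  set x : ℝ := 1 + ∑ _l : Fin m, |c| * |a| * (1 / s) with hx
  refine ⟨Real.logb 2 (1 + (Fintype.card (Fin m)).factorial • x ^ Fintype.card (Fin m)),
    fun X hX hT B hB => ?_⟩
  have hx0 : 0 ≤ x := by positivity
  have hd := Matrix.det_le (abv := IsAbsoluteValue.toAbsoluteValue (norm : ℂ → ℝ))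
    (A := 1 + (c • (F * X * Fᴴ)) * (s • (1 : Matrix (Fin m) (Fin m) ℂ) + B)⁻¹) (x := x) (by
      intro i j
      change ‖(_ : ℂ)‖ ≤ _
      rw [Matrix.add_apply]
      refine (norm_add_le _ _).trans (add_le_add ?_ ?_)
      · rw [Matrix.one_apply]; split_ifs <;> simp
      · rw [Matrix.mul_apply]
        refine (norm_sum_le _ _).trans (Finset.sum_le_sum fun l _ => ?_)
        rw [norm_mul, Matrix.smul_apply, norm_smul, Real.norm_eq_abs]
        exact mul_le_mul (mul_le_mul_of_nonneg_left ((ha X hX hT i l).trans (le_abs_self a))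
          (abs_nonneg _)) (aux_inv_entry s hs B hB l j) (norm_nonneg _) (by positivity))
  change ‖(_ : ℂ)‖ ≤ _ at hd
  set d := (1 + (c • (F * X * Fᴴ)) * (s • (1 : Matrix (Fin m) (Fin m) ℂ) + B)⁻¹).det
  set y := (Fintype.card (Fin m)).factorial • x ^ Fintype.card (Fin m)
  have hy : |d.re| ≤ y := (Complex.abs_re_le_norm d).trans hd
  have hy0 : 0 ≤ y := (abs_nonneg _).trans hy
  rw [← Real.logb_abs]
  rcases (abs_nonneg d.re).eq_or_lt with h0 | h0
  · rw [← h0, Real.logb_zero]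
    exact Real.logb_nonneg (by norm_num) (by linarith)
  · exact Real.logb_le_logb_of_le (by norm_num) h0 (by linarith)


lemma aux_bdd (K N : ℕ) (hK : 1 ≤ K) (M : ℕ → ℕ)
    (H : (k : ℕ) → Matrix (Fin (M k)) (Fin N) ℂ)
    (Ψ : (k : ℕ) → Matrix (Fin N) (Fin (snsDim N M k)) ℂ)
    (L : ℕ → ℝ) (hL : ∀ k ∈ Finset.Icc 1 K, 0 < L k) (s : ℝ) (hs : 0 < s) (η ηc : ℕ → ℝ)
    (hη : ∀ k ∈ Finset.Icc 1 K, 0 ≤ η k) (hηc : ∀ k ∈ Finset.Icc 1 K, 0 ≤ ηc k) (PT : ℝ) :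
    BddAbove {r : ℝ | ∃ (Qc : Matrix (Fin N) (Fin N) ℂ)
      (X : (k : ℕ) → Matrix (Fin (snsDim N M k)) (Fin (snsDim N M k)) ℂ),
    Qc.PosSemidef ∧
    Qc.rank ≤ (Finset.Icc 1 K).inf' (Finset.nonempty_Icc.mpr hK) M ∧
    (∀ k ∈ Finset.Icc 1 K, (X k).PosSemidef ∧ (X k).rank ≤ M k) ∧
    Qc.trace.re + ∑ k ∈ Finset.Icc 1 K, (X k).trace.re ≤ PT ∧
    r = snsWSR K N hK M H Ψ L s η ηc Qc X} := by
  obtain ⟨Rc, hRc⟩ := aux_rate_bound (H 1) PT (1 / L 1) s hs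
  choose R hR using fun k => aux_rate_bound (H k * Ψ k) PT (1 / L k) s hs
  refine ⟨(∑ k ∈ Finset.Icc 1 K, η k * ηc k * Rc) + ∑ k ∈ Finset.Icc 1 K, η k * R k, ?_⟩
  rintro r ⟨Qc, X, hQ, -, hX, htr, rfl⟩
  have hXt : ∀ k ∈ Finset.Icc 1 K, 0 ≤ (X k).trace.re := fun k hk =>
    (Complex.le_def.1 (hX k hk).1.trace_nonneg).1
  have hQt : 0 ≤ Qc.trace.re := (Complex.le_def.1 hQ.trace_nonneg).1
  have hQ1 : Qc.trace.re ≤ PT := by linarith [Finset.sum_nonneg hXt]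
  have hX1 : ∀ k ∈ Finset.Icc 1 K, (X k).trace.re ≤ PT := fun k hk => by
    linarith [Finset.single_le_sum hXt hk]
  have hI : ∀ k ∈ Finset.Icc 1 K, ∀ n ≤ k, ((1 / L k) •
      (H k * (∑ j ∈ Finset.Icc 1 n, Ψ j * X j * (Ψ j)ᴴ) * (H k)ᴴ)).PosSemidef := by
    intro k hk n hn
    refine Matrix.PosSemidef.smul ?_ (by have := hL k hk; positivity)
    refine Matrix.PosSemidef.mul_mul_conjTranspose_same ?_ _
    refine Matrix.posSemidef_sum _ fun j hj => ?_
    refine Matrix.PosSemidef.mul_mul_conjTranspose_same (hX j ?_).1 _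
    simp only [Finset.mem_Icc] at hj hk ⊢
    omega
  have h1K : 1 ∈ Finset.Icc 1 K := by simp [hK]
  unfold snsWSR
  refine add_le_add (Finset.sum_le_sum fun k hk => ?_) (Finset.sum_le_sum fun k hk => ?_)
  · refine mul_le_mul_of_nonneg_left ?_ (mul_nonneg (hη k hk) (hηc k hk))
    refine (Finset.inf'_le _ h1K).trans ?_
    exact hRc Qc hQ hQ1 _ (hI 1 h1K 1 le_rfl)
  · refine mul_le_mul_of_nonneg_left ?_ (hη k hk)
    have := hR k (X k) (hX k hk).1 (hX1 k hk) _ (hI k hk (k - 1) (by omega))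
    unfold snsPrivateRate
    rw [show H k * (Ψ k * X k * (Ψ k)ᴴ) * (H k)ᴴ = H k * Ψ k * X k * (H k * Ψ k)ᴴ by
      rw [conjTranspose_mul]; simp only [Matrix.mul_assoc]]
    exact this

/-- The blocks of the zero-forcing pseudo-inverse. -/
lemma aux_blocks (K N : ℕ) (M : ℕ → ℕ)
    (H : (k : ℕ) → Matrix (Fin (M k)) (Fin N) ℂ)
    (hrank : (stackMat N M H (K + 1)).rank
      = Fintype.card ((j : Fin K) × Fin (M (j.val + 1)))) :
    ∃ W : (k : ℕ) → Matrix (Fin N) (Fin (M k)) ℂ,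
      (∀ k ∈ Finset.Icc 1 K, H k * W k = 1) ∧
      (∀ j ∈ Finset.Icc 1 K, ∀ k ∈ Finset.Icc 1 K, j ≠ k → H j * W k = 0) ∧
      ∀ p : ℕ → ℕ → ℝ, (zfPrecoder K N M H p * (zfPrecoder K N M H p)ᴴ).trace =
        ∑ k ∈ Finset.Icc 1 K,
          ((W k * diagonal fun l : Fin (M k) => (Real.sqrt (p k l) : ℂ)) *
            (W k * diagonal fun l : Fin (M k) => (Real.sqrt (p k l) : ℂ))ᴴ).trace := by
  set S := stackMat N M H (K + 1) with hS
  have hu : IsUnit (S * Sᴴ) := by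
    rw [← Matrix.linearIndependent_rows_iff_isUnit, linearIndependent_iff_card_eq_finrank_span,
      Set.finrank]
    rw [← Matrix.rank_self_mul_conjTranspose, Matrix.rank_eq_finrank_span_row] at hrank
    exact hrank.symm
  set V := Sᴴ * (S * Sᴴ)⁻¹ with hV
  have hSV : S * V = 1 := by
    rw [hV, ← Matrix.mul_assoc]
    exact Matrix.mul_nonsing_inv _ ((Matrix.isUnit_iff_isUnit_det _).1 hu)
  let W : (k : ℕ) → Matrix (Fin N) (Fin (M k)) ℂ := fun k => match k with
    | 0 => 0
    | j + 1 => if h : j < K then Matrix.of fun a b => V a ⟨⟨j, h⟩, b⟩ else 0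
  have hW : ∀ (j : ℕ) (h : j < K), W (j + 1) = Matrix.of fun a b => V a ⟨⟨j, h⟩, b⟩ := by
    intro j h
    simp only [W, dif_pos h]
  have hHW : ∀ (i j : ℕ) (hi : i < K) (hj : j < K) (a : Fin (M (i + 1))) (b : Fin (M (j + 1))),
      (H (i + 1) * W (j + 1)) a b =
        (1 : Matrix ((j : Fin K) × Fin (M (j.val + 1))) ((j : Fin K) × Fin (M (j.val + 1))) ℂ)
          ⟨⟨i, hi⟩, a⟩ ⟨⟨j, hj⟩, b⟩ := by
    intro i j hi hj a b
    have := congrFun (congrFun hSV ⟨⟨i, hi⟩, a⟩) ⟨⟨j, hj⟩, b⟩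
    rw [hW j hj]
    exact this
  refine ⟨W, ?_, ?_, ?_⟩
  · intro k hk
    obtain ⟨i, rfl⟩ : ∃ i, k = i + 1 := ⟨k - 1, by simp at hk; omega⟩
    have hi : i < K := by simp at hk; omega
    ext a b
    rw [hHW i i hi hi, Matrix.one_apply, Matrix.one_apply]
    simp
  · intro j hj k hk hjk
    obtain ⟨i, rfl⟩ : ∃ i, k = i + 1 := ⟨k - 1, by simp at hk; omega⟩
    obtain ⟨l, rfl⟩ : ∃ i, j = i + 1 := ⟨j - 1, by simp at hj; omega⟩
    have hi : i < K := by simp at hk; omega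
    have hl : l < K := by simp at hj; omega
    ext a b
    rw [hHW l i hl hi, Matrix.one_apply, if_neg]
    · rfl
    · intro h
      have := congrArg (fun x => x.1.val) h
      simp at this
      omega
  · intro p
    have e : ∀ f : ℕ → ℂ, ∑ k ∈ Finset.Icc 1 K, f k = ∑ j : Fin K, f (j.val + 1) := by
      intro f
      rw [Fin.sum_univ_eq_sum_range (fun j => f (j + 1)), Finset.range_eq_Ico,
        Finset.sum_Ico_add' f 0 K 1]
      rfl
    rw [e, Matrix.trace_mul_comm, Matrix.trace]
    rw [show (Finset.univ : Finset ((j : Fin (K + 1 - 1)) × Fin (M (j.val + 1)))) =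
      Finset.univ.sigma fun _ => Finset.univ from rfl, Finset.sum_sigma]
    refine Finset.sum_congr rfl fun j _ => ?_
    rw [Matrix.trace_mul_comm, Matrix.trace]
    refine Finset.sum_congr rfl fun l _ => ?_
    simp only [Matrix.diag, Matrix.mul_apply, conjTranspose_apply]
    refine Finset.sum_congr rfl fun a _ => ?_
    have h1 : zfPrecoder K N M H p a ⟨j, l⟩ =
        (W (j.val + 1) * diagonal fun l : Fin (M (j.val + 1)) =>
          (Real.sqrt (p (j.val + 1) l) : ℂ)) a l := by
      unfold zfPrecoder
      rw [Matrix.mul_diagonal, Matrix.mul_diagonal, hW j.val j.isLt]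
      rfl
    simp only [Matrix.mul_apply] at h1
    rw [h1]

/-- Columns annihilated by the previous channels lie in the range of `Ψ k`. -/
lemma aux_proj (K N : ℕ) (M : ℕ → ℕ)
    (hsum : ∑ k ∈ Finset.Icc 1 K, M k ≤ N)
    (H : (k : ℕ) → Matrix (Fin (M k)) (Fin N) ℂ) (W : (k : ℕ) → Matrix (Fin N) (Fin (M k)) ℂ)
    (k : ℕ) (hk : k ∈ Finset.Icc 1 K)
    (hW1 : ∀ k ∈ Finset.Icc 1 K, H k * W k = 1)
    (hW0 : ∀ j ∈ Finset.Icc 1 K, ∀ k ∈ Finset.Icc 1 K, j ≠ k → H j * W k = 0)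
    (P : Matrix (Fin N) (Fin (snsDim N M k)) ℂ)
    (hP : Pᴴ * P = 1) (hP0 : ∀ j, 1 ≤ j → j < k → H j * P = 0) :
    P * (Pᴴ * W k) = W k := by
  have hk' := Finset.mem_Icc.1 hk
  let S := stackMat N M H k
  let V0 : Matrix (Fin N) ((j : Fin (k - 1)) × Fin (M (j.val + 1))) ℂ :=
    Matrix.of fun a p => W (p.1.val + 1) a p.2
  have hSV0 : S * V0 = 1 := by
    ext ⟨i, a⟩ ⟨j, b⟩
    have h : (S * V0) ⟨i, a⟩ ⟨j, b⟩ = (H (i.val + 1) * W (j.val + 1)) a b := rfl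
    rw [h]
    by_cases hij : i = j
    · subst hij
      rw [hW1 _ (by simp; omega), Matrix.one_apply, Matrix.one_apply]
      simp
    · rw [hW0 _ (by simp; omega) _ (by simp; omega)
        (fun h => hij (Fin.ext (by omega))), Matrix.one_apply, if_neg]
      · rfl
      · intro h
        exact hij (congrArg Sigma.fst h)
  have hSP : S * P = 0 := by
    ext ⟨i, a⟩ b
    have h : (S * P) ⟨i, a⟩ b = (H (i.val + 1) * P) a b := rfl
    rw [h, hP0 _ (by omega) (by omega)]
    rfl
  have hSW : S * W k = 0 := by
    ext ⟨i, a⟩ b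
    have h : (S * W k) ⟨i, a⟩ b = (H (i.val + 1) * W k) a b := rfl
    rw [h, hW0 _ (by simp; omega) _ hk (by omega)]
    rfl
  let V := V0 - P * (Pᴴ * V0)
  have hSV : S * V = 1 := by
    rw [Matrix.mul_sub, ← Matrix.mul_assoc, hSP, hSV0]; simp
  have hPV : Pᴴ * V = 0 := by
    rw [Matrix.mul_sub, ← Matrix.mul_assoc, hP]; simp
  have hAB : fromRows S Pᴴ * fromCols V P = 1 := by
    rw [Matrix.fromRows_mul_fromCols, hSV, hSP, hPV, hP, Matrix.fromBlocks_one]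
  have e : ∑ j : Fin (k - 1), M (j.val + 1) = ∑ j ∈ Finset.Icc 1 (k - 1), M j := by
    rw [Fin.sum_univ_eq_sum_range (fun j => M (j + 1)), Finset.range_eq_Ico,
      Finset.sum_Ico_add' M 0 (k - 1) 1]
    rfl
  have hle : ∑ j ∈ Finset.Icc 1 (k - 1), M j ≤ N :=
    (Finset.sum_le_sum_of_subset (Finset.Icc_subset_Icc le_rfl (by omega))).trans hsum
  have hcard : Fintype.card (((j : Fin (k - 1)) × Fin (M (j.val + 1))) ⊕ Fin (snsDim N M k)) =
      Fintype.card (Fin N) := by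
    rw [Fintype.card_sum, Fintype.card_sigma]
    simp only [Fintype.card_fin]
    rw [e, snsDim]
    omega
  have hBA : fromCols V P * fromRows S Pᴴ = 1 :=
    (Matrix.mul_eq_one_comm_of_card_eq _ _ _ hcard).1 hAB
  rw [Matrix.fromCols_mul_fromRows] at hBA
  have := congrArg (fun A => A * W k) hBA
  simp only [Matrix.add_mul, Matrix.mul_assoc, hSW, Matrix.mul_zero, zero_add, Matrix.one_mul] at this
  exact this

/-- Proposition 1, second claim: `R⋆ ≥ R^{ZF⋆}`: the optimal weighted sum rate of SNS
precoding dominates that of zero-forcing precoding. -/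
theorem sns_wsr_ge_zf (K N : ℕ) (hK : 1 ≤ K) (hN : 0 < N)
    (M : ℕ → ℕ) (hM : ∀ k ∈ Finset.Icc 1 K, 0 < M k)
    (hsum : ∑ k ∈ Finset.Icc 1 K, M k ≤ N)
    (H : (k : ℕ) → Matrix (Fin (M k)) (Fin N) ℂ)
    (hrank : (stackMat N M H (K + 1)).rank
      = Fintype.card ((j : Fin K) × Fin (M (j.val + 1))))
    (L : ℕ → ℝ) (hL : ∀ k ∈ Finset.Icc 1 K, 0 < L k)
    (s : ℝ) (hs : 0 < s) (PT : ℝ) (hPT : 0 < PT)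
    (η ηc : ℕ → ℝ)
    (hη : ∀ k ∈ Finset.Icc 1 K, 0 ≤ η k) (hηc : ∀ k ∈ Finset.Icc 1 K, 0 ≤ ηc k)
    (Ψ : (k : ℕ) → Matrix (Fin N) (Fin (snsDim N M k)) ℂ)
    (hΨ1 : Ψ 1 = (1 : Matrix (Fin N) (Fin N) ℂ))
    (hΨorth : ∀ k ∈ Finset.Icc 2 K, (Ψ k)ᴴ * Ψ k = 1)
    (hΨnull : ∀ k ∈ Finset.Icc 2 K, ∀ j, 1 ≤ j → j < k → H j * Ψ k = 0) :
    zfOptWSR K N M H L s η PT ≤ snsOptWSR K N hK M H Ψ L s η ηc PT := by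
  have hΨo : ∀ k ∈ Finset.Icc 1 K, (Ψ k)ᴴ * Ψ k = 1 := by
    intro k hk
    rcases (Finset.mem_Icc.1 hk).1.eq_or_lt with h | h
    · subst h
      have h1 : ((1 : Matrix (Fin N) (Fin N) ℂ)ᴴ * (1 : Matrix (Fin N) (Fin N) ℂ)) = 1 := by simp
      rw [hΨ1]
      exact h1
    · exact hΨorth k (Finset.mem_Icc.2 ⟨h, (Finset.mem_Icc.1 hk).2⟩)
  have hΨn : ∀ k ∈ Finset.Icc 1 K, ∀ j, 1 ≤ j → j < k → H j * Ψ k = 0 := by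
    intro k hk j hj hjk
    exact hΨnull k (Finset.mem_Icc.2 ⟨by omega, (Finset.mem_Icc.1 hk).2⟩) j hj hjk
  obtain ⟨W, hW1, hW0, hWt⟩ := aux_blocks K N M H hrank
  have hproj := fun k hk => aux_proj K N M hsum H W k hk hW1 hW0 (Ψ k) (hΨo k hk) (hΨn k hk)
  unfold zfOptWSR
  refine csSup_le ⟨_, fun _ _ => 0, by simp, ?_, rfl⟩ ?_
  · rw [hWt]
    simp [hPT.le]
  rintro r ⟨p, hp, htr, rfl⟩
  refine le_csSup (aux_bdd K N hK M H Ψ L hL s hs η ηc hη hηc PT) ?_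
  let E : (k : ℕ) → Matrix (Fin (M k)) (Fin (M k)) ℂ :=
    fun k => diagonal fun l : Fin (M k) => (Real.sqrt (p k l) : ℂ)
  let Y : (k : ℕ) → Matrix (Fin (snsDim N M k)) (Fin (M k)) ℂ :=
    fun k => (Ψ k)ᴴ * W k * E k
  have hΨY : ∀ k ∈ Finset.Icc 1 K, Ψ k * Y k = W k * E k := by
    intro k hk
    simp only [Y]
    rw [← Matrix.mul_assoc, hproj k hk]
  clear_value Y
  have hΨX : ∀ k ∈ Finset.Icc 1 K, Ψ k * (Y k * (Y k)ᴴ) * (Ψ k)ᴴ = W k * E k * (W k * E k)ᴴ := by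
    intro k hk
    rw [← hΨY k hk, conjTranspose_mul]
    simp only [Matrix.mul_assoc]
  have hEE : ∀ k ∈ Finset.Icc 1 K, E k * (E k)ᴴ = diagonal fun l : Fin (M k) => (p k l : ℂ) := by
    intro k hk
    simp only [E, diagonal_conjTranspose, diagonal_mul_diagonal]
    congr 1
    funext l
    simp only [Pi.star_apply, Complex.star_def, Complex.conj_ofReal]
    rw [← Complex.ofReal_mul, Real.mul_self_sqrt (hp k hk l l.isLt)]
  refine ⟨0, fun k => Y k * (Y k)ᴴ, PosSemidef.zero, by simp, fun k hk =>
    ⟨posSemidef_self_mul_conjTranspose _, ?_⟩, ?_, ?_⟩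
  · exact (Matrix.rank_mul_le_left _ _).trans ((Matrix.rank_le_card_width _).trans (by simp))
  · rw [hWt, Complex.re_sum] at htr
    rw [Matrix.trace_zero, Complex.zero_re, zero_add]
    refine le_trans (le_of_eq ?_) htr
    refine Finset.sum_congr rfl fun k hk => ?_
    congr 1
    change _ = (W k * E k * (W k * E k)ᴴ).trace
    rw [← hΨX k hk, Matrix.trace_mul_comm (Ψ k * (Y k * (Y k)ᴴ)), ← Matrix.mul_assoc, hΨo k hk, Matrix.one_mul]
  · have hc : ∀ k, snsCommonRate N M H Ψ L s 0 (fun k => Y k * (Y k)ᴴ) k = 0 := by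
      intro k
      simp [snsCommonRate]
    unfold snsWSR
    have hinf : (Finset.Icc 1 K).inf' (Finset.nonempty_Icc.mpr hK)
        (snsCommonRate N M H Ψ L s 0 (fun k => Y k * (Y k)ᴴ)) = 0 := by
      rw [funext hc]
      exact Finset.inf'_const _ _
    rw [hinf]
    simp only [mul_zero, Finset.sum_const_zero, zero_add]
    refine Finset.sum_congr rfl fun k hk => ?_
    congr 1
    have hk' := Finset.mem_Icc.1 hk
    unfold snsPrivateRate
    have hI : H k * (∑ j ∈ Finset.Icc 1 (k - 1), Ψ j * (Y j * (Y j)ᴴ) * (Ψ j)ᴴ) * (H k)ᴴ = 0 := by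
      rw [Matrix.mul_sum, Matrix.sum_mul]
      refine Finset.sum_eq_zero fun j hj => ?_
      have hj' := Finset.mem_Icc.1 hj
      have hjK : j ∈ Finset.Icc 1 K := Finset.mem_Icc.2 ⟨hj'.1, by omega⟩
      rw [hΨX j hjK]
      simp only [← Matrix.mul_assoc]
      rw [hW0 k hk j hjK (by omega)]
      simp only [Matrix.zero_mul]
    have hD : H k * (Ψ k * (Y k * (Y k)ᴴ) * (Ψ k)ᴴ) * (H k)ᴴ =
        diagonal fun l : Fin (M k) => (p k l : ℂ) := by
      rw [hΨX k hk, ← hEE k hk]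
      rw [show H k * (W k * E k * (W k * E k)ᴴ) * (H k)ᴴ =
        (H k * W k) * E k * ((H k * W k) * E k)ᴴ by
          simp only [conjTranspose_mul, Matrix.mul_assoc], hW1 k hk, Matrix.one_mul]
    have hinv : (s • (1 : Matrix (Fin (M k)) (Fin (M k)) ℂ))⁻¹ = s⁻¹ • 1 := by
      apply Matrix.inv_eq_right_inv
      rw [smul_mul_smul_comm, mul_inv_cancel₀ hs.ne', one_smul, Matrix.one_mul]
    have hdet : 1 + ((1 / L k) • diagonal fun l : Fin (M k) => (p k l : ℂ)) *
        (s⁻¹ • (1 : Matrix (Fin (M k)) (Fin (M k)) ℂ)) =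
        diagonal fun l : Fin (M k) => ((1 + p k l / (L k * s) : ℝ) : ℂ) := by
      rw [smul_mul_smul_comm, Matrix.mul_one]
      ext i j
      by_cases hij : i = j
      · subst hij
        simp only [Matrix.add_apply, Matrix.one_apply_eq, Matrix.smul_apply, diagonal_apply_eq,
          Complex.real_smul]
        push_cast
        field_simp
      · simp [hij]
    rw [hI, hD, smul_zero, add_zero, hinv, hdet, det_diagonal, ← Complex.ofReal_prod,
      Complex.ofReal_re, Real.logb_prod, Finset.sum_range]
    intro l _
    have := hp k hk l l.isLt
    have := hL k hk
    positivity
end
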